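/- arXiv:2006.12105 — 3 statements merged into one kernel-verified Lean document; each statement's English description precedes it below -/
import Mathlib

section
/- Let f be an inner function with f(0)=0 and let f^n denote the n-th iterate. For positive integers k < j, the integral over the unit circle of conj(f^k)·f^j with respect to normalized Lebesgue measure equals f'(0)^{j-k}. -/
open MeasureTheory Set Metric Filter Complex

/-- Normalized Lebesgue (arc-length) measure on the unit circle, as a measure on ℂ. -/
noncomputable def m : Measure ℂ :=
  (ENNReal.ofReal (2 * Real.pi))⁻¹ •
    (Measure.map (fun θ : ℝ => Complex.exp ((θ : ℂ) * Complex.I))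
      (volume.restrict (Set.Ioc (0:ℝ) (2 * Real.pi))))

/-- `spow F ε n` is `F^[n]` if `ε = 1` and its complex conjugate if `ε = -1`. -/
noncomputable def spow (F : ℂ → ℂ) (ε : ℤ) (n : ℕ) (z : ℂ) : ℂ :=
  if ε = 1 then F^[n] z else (starRingEnd ℂ) (F^[n] z)

open scoped Topology ComplexConjugate

lemma measurable_expMap : Measurable (fun θ : ℝ => Complex.exp ((θ : ℂ) * Complex.I)) := by
  fun_prop

instance isProbabilityMeasure_m : IsProbabilityMeasure m := by
  constructor
  have h : ENNReal.ofReal (2 * Real.pi) ≠ 0 := by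
    simpa using Real.pi_pos
  rw [m, Measure.smul_apply, Measure.map_apply measurable_expMap MeasurableSet.univ]
  simp only [preimage_univ, Measure.restrict_apply_univ, Real.volume_Ioc, sub_zero, smul_eq_mul]
  exact ENNReal.inv_mul_cancel h ENNReal.ofReal_ne_top

lemma ae_norm_eq_one : ∀ᵐ z ∂m, ‖z‖ = 1 := by
  refine Measure.ae_smul_measure ?_ _
  rw [ae_map_iff measurable_expMap.aemeasurable
    (measurableSet_eq_fun measurable_norm measurable_const)]
  exact Eventually.of_forall fun θ => Complex.norm_exp_ofReal_mul_I θ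

lemma aestronglyMeasurable_of_continuousOn_sphere {φ : ℂ → ℂ}
    (hφ : ContinuousOn φ (sphere 0 1)) : AEStronglyMeasurable φ m := by
  have h : m.restrict (sphere 0 1) = m :=
    Measure.restrict_eq_self_of_ae_mem (by simpa using ae_norm_eq_one)
  rw [← h]
  exact hφ.aestronglyMeasurable isClosed_sphere.measurableSet

lemma integral_m_eq_circleAverage {φ : ℂ → ℂ} (hφ : ContinuousOn φ (sphere 0 1)) :
    ∫ z, φ z ∂m = Real.circleAverage φ 0 1 := by
  have hm := aestronglyMeasurable_of_continuousOn_sphere hφ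
  have hc : ENNReal.ofReal (2 * Real.pi) ≠ 0 := by simpa using Real.pi_pos
  have hm' : AEStronglyMeasurable φ (Measure.map (fun θ : ℝ => Complex.exp ((θ : ℂ) * Complex.I))
      (volume.restrict (Set.Ioc (0:ℝ) (2 * Real.pi)))) := by
    refine hm.mono_ac ?_
    exact Measure.absolutelyContinuous_smul (ENNReal.inv_ne_zero.2 ENNReal.ofReal_ne_top)
  rw [m, integral_smul_measure, integral_map measurable_expMap.aemeasurable hm',
    Real.circleAverage_def, intervalIntegral.integral_of_le Real.two_pi_pos.le, ENNReal.toReal_inv,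
    ENNReal.toReal_ofReal Real.two_pi_pos.le]
  simp [circleMap]

/-- Mean value property with respect to `m`. -/
lemma integral_dilate {h : ℂ → ℂ} (hh : DifferentiableOn ℂ h (ball 0 1)) {r : ℝ}
    (hr : r ∈ Ioo (0 : ℝ) 1) : ∫ z, h (r * z) ∂m = h 0 := by
  have hmem : ∀ z ∈ closedBall (0 : ℂ) 1, (r : ℂ) * z ∈ ball (0 : ℂ) 1 := by
    intro z hz
    simp only [mem_closedBall, dist_zero_right, mem_ball, norm_mul, norm_real,
      Real.norm_of_nonneg hr.1.le] at hz ⊢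
    nlinarith [hr.1, hr.2, norm_nonneg z]
  have hd : DifferentiableOn ℂ (fun z => h (r * z)) (closedBall 0 1) :=
    hh.comp (by fun_prop) hmem
  rw [integral_m_eq_circleAverage (hd.continuousOn.mono sphere_subset_closedBall)]
  have := DiffContOnCl.circleAverage (f := fun z => h (r * z)) (c := 0) (R := 1)
    (DifferentiableOn.diffContOnCl (by
      rw [abs_one, closure_ball _ one_ne_zero]; exact hd))
  simpa using this

lemma continuousOn_dilate {h : ℂ → ℂ} (hh : ContinuousOn h (ball 0 1)) {r : ℝ}
    (hr : r ∈ Ioo (0 : ℝ) 1) : ContinuousOn (fun z => h (r * z)) (sphere 0 1) := by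
  refine hh.comp (by fun_prop) fun z hz => ?_
  simp only [mem_sphere_iff_norm, sub_zero, mem_ball, dist_zero_right, norm_mul, norm_real,
    Real.norm_of_nonneg hr.1.le] at hz ⊢
  nlinarith [hr.1, hr.2]

lemma integrable_of_bounded {φ : ℂ → ℂ} (hφ : AEStronglyMeasurable φ m) (C : ℝ)
    (hb : ∀ᵐ z ∂m, ‖φ z‖ ≤ C) : Integrable φ m :=
  Integrable.of_bound hφ C hb

lemma integrable_conj_m : Integrable (fun z : ℂ => conj z) m := by
  refine integrable_of_bounded (by fun_prop) 1 ?_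
  filter_upwards [ae_norm_eq_one] with z hz
  simp [hz]

lemma integral_id_m : ∫ z, z ∂m = 0 := by
  rw [integral_m_eq_circleAverage (φ := fun z => z) continuous_id.continuousOn]
  exact DiffContOnCl.circleAverage (f := fun z => z) differentiable_id.diffContOnCl

lemma integral_conj_m : ∫ z, conj z ∂m = 0 := by
  rw [integral_conj, integral_id_m, map_zero]

lemma integral_id_mul_dilate {h : ℂ → ℂ} (hh : DifferentiableOn ℂ h (ball 0 1)) {r : ℝ}
    (hr : r ∈ Ioo (0 : ℝ) 1) : ∫ z, z * h (r * z) ∂m = 0 := by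
  have h1 := integral_dilate (h := fun z => z * h z) (differentiableOn_id.mul hh) hr
  simp only [mul_assoc, integral_const_mul, zero_mul, mul_eq_zero, ofReal_eq_zero] at h1
  exact h1.resolve_left hr.1.ne'

lemma integral_conj_mul_dilate {h : ℂ → ℂ} (hh : DifferentiableOn ℂ h (ball 0 1)) {r : ℝ}
    (hr : r ∈ Ioo (0 : ℝ) 1) : ∫ z, conj z * h (r * z) ∂m = r * deriv h 0 := by
  have hk : DifferentiableOn ℂ (dslope h 0) (ball 0 1) :=
    (differentiableOn_dslope (ball_mem_nhds _ one_pos)).2 hh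
  have h1 := integral_dilate hk hr
  have hkc := continuousOn_dilate hk.continuousOn hr
  have hki : Integrable (fun z => dslope h 0 (r * z)) m := by
    obtain ⟨C, hC⟩ := (isCompact_sphere (0 : ℂ) 1).exists_bound_of_continuousOn hkc
    refine integrable_of_bounded (aestronglyMeasurable_of_continuousOn_sphere hkc) C ?_
    filter_upwards [ae_norm_eq_one] with z hz using hC z (by simpa using hz)
  have h2 : (fun z => conj z * h (r * z)) =ᵐ[m]
      fun z => h 0 * conj z + r * dslope h 0 (r * z) := by
    filter_upwards [ae_norm_eq_one] with z hz
    have h3 := sub_smul_dslope h 0 (r * z)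
    have h4 : conj z * z = 1 := by rw [Complex.conj_mul', hz]; simp
    rw [eq_add_of_sub_eq h3.symm]
    simp only [sub_zero, smul_eq_mul]
    linear_combination (r * dslope h 0 (r * z)) * h4
  rw [integral_congr_ae h2, integral_add (integrable_conj_m.const_mul _) (hki.const_mul _), integral_const_mul,
    integral_const_mul, integral_conj_m, h1, dslope_same]
  simp

lemma eventually_mem_Ioo : ∀ᶠ r : ℝ in 𝓝[<] 1, r ∈ Ioo (0 : ℝ) 1 :=
  Ioo_mem_nhdsLT one_pos

/-- `H` is the radial boundary function of the holomorphic function `h`, bounded by one. -/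
structure IsRadialLimit (h H : ℂ → ℂ) : Prop where
  differentiableOn : DifferentiableOn ℂ h (ball 0 1)
  norm_le : ∀ z ∈ ball (0 : ℂ) 1, ‖h z‖ ≤ 1
  tendsto : ∀ᵐ z ∂m, Tendsto (fun r : ℝ => h ((r : ℂ) * z)) (𝓝[<] 1) (𝓝 (H z))

namespace IsRadialLimit

variable {h H : ℂ → ℂ}

lemma tendsto_integral (hH : IsRadialLimit h H) {w : ℂ → ℂ} (hw : Continuous w)
    (hw1 : ∀ z, ‖z‖ = 1 → ‖w z‖ ≤ 1) :
    Tendsto (fun r : ℝ => ∫ z, w z * h (r * z) ∂m) (𝓝[<] 1) (𝓝 (∫ z, w z * H z ∂m)) := by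
  refine tendsto_integral_filter_of_dominated_convergence (fun _ => 1) ?_ ?_
    (integrable_const _) ?_
  · filter_upwards [eventually_mem_Ioo] with r hr
    exact aestronglyMeasurable_of_continuousOn_sphere
      (hw.continuousOn.mul (continuousOn_dilate hH.differentiableOn.continuousOn hr))
  · filter_upwards [eventually_mem_Ioo] with r hr
    filter_upwards [ae_norm_eq_one] with z hz
    rw [norm_mul]
    refine mul_le_one₀ (hw1 z hz) (norm_nonneg _) (hH.norm_le _ ?_)
    simp [hz, abs_of_pos hr.1, hr.2]
  · filter_upwards [hH.tendsto] with z hz using hz.const_mul _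

lemma integral_eq (hH : IsRadialLimit h H) : ∫ z, H z ∂m = h 0 := by
  have h1 := hH.tendsto_integral (w := fun _ => 1) continuous_const (by simp)
  simp only [one_mul] at h1
  refine tendsto_nhds_unique h1 (tendsto_const_nhds.congr' ?_)
  filter_upwards [eventually_mem_Ioo] with r hr
  exact (integral_dilate hH.differentiableOn hr).symm

lemma integral_id_mul (hH : IsRadialLimit h H) : ∫ z, z * H z ∂m = 0 := by
  refine tendsto_nhds_unique (hH.tendsto_integral continuous_id (fun z hz => hz.le))
    (tendsto_const_nhds.congr' ?_)
  filter_upwards [eventually_mem_Ioo] with r hr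
  exact (integral_id_mul_dilate hH.differentiableOn hr).symm

lemma integral_conj_mul (hH : IsRadialLimit h H) : ∫ z, conj z * H z ∂m = deriv h 0 := by
  refine tendsto_nhds_unique (hH.tendsto_integral continuous_conj (fun z hz => by simp [hz])) ?_
  have h1 : Tendsto (fun r : ℝ => (r : ℂ) * deriv h 0) (𝓝[<] 1) (𝓝 ((1 : ℝ) * deriv h 0)) :=
    (Continuous.tendsto (by fun_prop) 1).mono_left nhdsWithin_le_nhds
  rw [ofReal_one, one_mul] at h1
  refine h1.congr' ?_
  filter_upwards [eventually_mem_Ioo] with r hr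
  exact (integral_conj_mul_dilate hH.differentiableOn hr).symm

lemma pow (hH : IsRadialLimit h H) (n : ℕ) :
    IsRadialLimit (fun z => h z ^ n) (fun z => H z ^ n) where
  differentiableOn := hH.differentiableOn.pow n
  norm_le z hz := by
    rw [norm_pow]
    exact pow_le_one₀ (norm_nonneg _) (hH.norm_le z hz)
  tendsto := by
    filter_upwards [hH.tendsto] with z hz using hz.pow n

lemma congr_ae (hH : IsRadialLimit h H) {G : ℂ → ℂ} (hG : H =ᵐ[m] G) : IsRadialLimit h G where
  differentiableOn := hH.differentiableOn
  norm_le := hH.norm_le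
  tendsto := by
    filter_upwards [hH.tendsto, hG] with z hz h1
    rwa [← h1]

lemma aemeasurable (hH : IsRadialLimit h H) : AEMeasurable H m := by
  have hr : ∀ n : ℕ, (1 - 1 / ((n : ℝ) + 2)) ∈ Ioo (0 : ℝ) 1 := by
    intro n
    have h1 : (0 : ℝ) < 1 / ((n : ℝ) + 2) := by positivity
    have h2 : 1 / ((n : ℝ) + 2) < 1 := by
      rw [div_lt_one (by positivity)]
      linarith [n.cast_nonneg (α := ℝ)]
    constructor <;> linarith
  have ht : Tendsto (fun n : ℕ => 1 - 1 / ((n : ℝ) + 2)) atTop (𝓝[<] 1) := by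
    refine tendsto_nhdsWithin_iff.2 ⟨?_, Eventually.of_forall fun n => (hr n).2⟩
    have h1 : Tendsto (fun n : ℕ => 1 / ((n : ℝ) + 2)) atTop (𝓝 0) := by
      simp only [one_div]
      exact (tendsto_atTop_add_const_right _ _ tendsto_natCast_atTop_atTop).inv_tendsto_atTop
    simpa using h1.const_sub 1
  refine aemeasurable_of_tendsto_metrizable_ae' (f := fun (n : ℕ) z =>
    h ((1 - 1 / ((n : ℝ) + 2) : ℝ) * z)) (fun n => ?_) ?_
  · exact (aestronglyMeasurable_of_continuousOn_sphere
      (continuousOn_dilate hH.differentiableOn.continuousOn (hr n))).aemeasurable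
  · filter_upwards [hH.tendsto] with z hz using hz.comp ht

end IsRadialLimit

local instance factTwoPiPos : Fact (0 < 2 * Real.pi) := ⟨Real.two_pi_pos⟩

/-- The argument of a complex number, as a point of `ℝ / 2πℤ`. -/
noncomputable def circleArg (z : ℂ) : AddCircle (2 * Real.pi) := (Complex.arg z : ℝ)

lemma measurable_circleArg : Measurable circleArg :=
  AddCircle.measurable_mk'.comp Complex.measurable_arg

lemma fourier_circleArg {z : ℂ} (hz : ‖z‖ = 1) (n : ℕ) :
    fourier (n : ℤ) (circleArg z) = z ^ n := by
  rw [circleArg, fourier_coe_apply]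
  have h1 := Complex.norm_mul_exp_arg_mul_I z
  rw [hz, ofReal_one, one_mul] at h1
  conv_rhs => rw [← h1, ← Complex.exp_nat_mul]
  congr 1
  have : (Real.pi : ℂ) ≠ 0 := by exact_mod_cast Real.pi_ne_zero
  push_cast
  field_simp

lemma integrable_mul_comp_circleArg {u Φ : ℂ → ℂ} (hu : Integrable u m) (hΦ : Measurable Φ)
    (φ : C(AddCircle (2 * Real.pi), ℂ)) :
    Integrable (fun z => u z * φ (circleArg (Φ z))) m := by
  refine hu.mul_bdd (c := ‖φ‖) ?_ (Eventually.of_forall fun z => φ.norm_coe_le_norm _)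
  exact (φ.continuous.measurable.comp (measurable_circleArg.comp hΦ)).aestronglyMeasurable

/-- The functional `φ ↦ ∫ u · (φ ∘ Φ) dm` on continuous functions on the circle. -/
noncomputable def weightedIntegral (u Φ : ℂ → ℂ) (hu : Integrable u m) (hΦ : Measurable Φ) :
    C(AddCircle (2 * Real.pi), ℂ) →L[ℂ] ℂ :=
  LinearMap.mkContinuous
    { toFun := fun φ => ∫ z, u z * φ (circleArg (Φ z)) ∂m
      map_add' := fun φ ψ => by
        simp only [ContinuousMap.add_apply, mul_add]
        exact integral_add (integrable_mul_comp_circleArg hu hΦ φ)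
          (integrable_mul_comp_circleArg hu hΦ ψ)
      map_smul' := fun c φ => by
        simp only [ContinuousMap.smul_apply, smul_eq_mul, RingHom.id_apply]
        rw [← integral_const_mul]
        congr 1 with z
        ring }
    (∫ z, ‖u z‖ ∂m) fun φ => by
      change ‖∫ z, u z * φ (circleArg (Φ z)) ∂m‖ ≤ _
      rw [← integral_mul_const]
      refine norm_integral_le_of_norm_le (hu.norm.mul_const _) (Eventually.of_forall fun z => ?_)
      rw [norm_mul]
      gcongr
      exact φ.norm_coe_le_norm _

/-- Two complex measures on the circle with the same Fourier coefficients have the same integrals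
against continuous functions. -/
lemma integral_mul_comp_eq {u v Φ Ψ g : ℂ → ℂ} (hu : Integrable u m) (hv : Integrable v m)
    (hΦ : Measurable Φ) (hΨ : Measurable Ψ) (hΦ1 : ∀ᵐ z ∂m, ‖Φ z‖ = 1)
    (hΨ1 : ∀ᵐ z ∂m, ‖Ψ z‖ = 1)
    (hpos : ∀ n : ℕ, ∫ z, u z * Φ z ^ n ∂m = ∫ z, v z * Ψ z ^ n ∂m)
    (hneg : ∀ n : ℕ, ∫ z, u z * conj (Φ z ^ n) ∂m = ∫ z, v z * conj (Ψ z ^ n) ∂m)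
    (hg : Continuous g) :
    ∫ z, u z * g (Φ z) ∂m = ∫ z, v z * g (Ψ z) ∂m := by
  have hdense := Submodule.dense_iff_topologicalClosure_eq_top.2
    (span_fourier_closure_eq_top (T := 2 * Real.pi))
  have hJ : weightedIntegral u Φ hu hΦ = weightedIntegral v Ψ hv hΨ := by
    refine ContinuousLinearMap.ext_on hdense ?_
    rintro _ ⟨n, rfl⟩
    change ∫ z, u z * fourier n (circleArg (Φ z)) ∂m = ∫ z, v z * fourier n (circleArg (Ψ z)) ∂m
    obtain ⟨k, rfl | rfl⟩ := n.eq_nat_or_neg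
    · refine Eq.trans (integral_congr_ae ?_) ((hpos k).trans (integral_congr_ae ?_))
      · filter_upwards [hΦ1] with z hz
        rw [fourier_circleArg hz]
      · filter_upwards [hΨ1] with z hz
        rw [fourier_circleArg hz]
    · refine Eq.trans (integral_congr_ae ?_) ((hneg k).trans (integral_congr_ae ?_))
      · filter_upwards [hΦ1] with z hz
        rw [fourier_neg, fourier_circleArg hz]
      · filter_upwards [hΨ1] with z hz
        rw [fourier_neg, fourier_circleArg hz]
  have hval : ∀ z : ℂ, ‖z‖ = 1 → g (fourier 1 (circleArg z)) = g z := fun z hz => by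
    have := fourier_circleArg hz 1
    rw [pow_one, Nat.cast_one] at this
    rw [this]
  have h1 := DFunLike.congr_fun hJ (ContinuousMap.comp ⟨g, hg⟩ (fourier 1))
  change ∫ z, u z * g (fourier 1 (circleArg (Φ z))) ∂m =
    ∫ z, v z * g (fourier 1 (circleArg (Ψ z))) ∂m at h1
  refine Eq.trans (integral_congr_ae ?_) (h1.trans (integral_congr_ae ?_))
  · filter_upwards [hΦ1] with z hz
    rw [hval _ hz]
  · filter_upwards [hΨ1] with z hz
    rw [hval _ hz]

lemma isRadialLimit_id : IsRadialLimit (fun z => z) (fun z => z) where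
  differentiableOn := differentiableOn_id
  norm_le z hz := by simpa using (mem_ball_zero_iff.1 hz).le
  tendsto := Eventually.of_forall fun z => by
    have h1 : Tendsto (fun r : ℝ => (r : ℂ) * z) (𝓝[<] 1) (𝓝 ((1 : ℝ) * z)) :=
      (Continuous.tendsto (by fun_prop) 1).mono_left nhdsWithin_le_nhds
    simpa using h1

/-- The boundary map of an inner function fixing the origin preserves `m`. -/
lemma IsRadialLimit.measurePreserving {f G : ℂ → ℂ} (hG : IsRadialLimit f G) (h0 : f 0 = 0)
    (hGm : Measurable G) (hG1 : ∀ᵐ z ∂m, ‖G z‖ = 1) : MeasurePreserving G m m := by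
  have hmom : ∀ n : ℕ, ∫ z, G z ^ n ∂m = ∫ z, z ^ n ∂m := fun n => by
    rw [(hG.pow n).integral_eq, (isRadialLimit_id.pow n).integral_eq, h0]
  have : IsProbabilityMeasure (Measure.map G m) :=
    Measure.isProbabilityMeasure_map hGm.aemeasurable
  refine ⟨hGm, ext_of_forall_integral_eq_of_IsFiniteMeasure fun g => ?_⟩
  rw [integral_map hGm.aemeasurable g.continuous.aestronglyMeasurable]
  have h1 := integral_mul_comp_eq (u := fun _ => 1) (v := fun _ => 1) (Ψ := fun z => z)
    (g := fun z => (g z : ℂ)) (integrable_const _) (integrable_const _) hGm measurable_id hG1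
    ae_norm_eq_one (fun n => by simpa using hmom n)
    (fun n => by simp only [one_mul, integral_conj, hmom n])
    (by fun_prop)
  simp only [one_mul] at h1
  exact_mod_cast h1

/-- The transfer operator of an inner function `f` fixing the origin maps `conj z` to
`deriv f 0 * conj z`. -/
lemma IsRadialLimit.integral_conj_mul_comp {f G : ℂ → ℂ} (hG : IsRadialLimit f G) (h0 : f 0 = 0)
    (hGm : Measurable G) (hG1 : ∀ᵐ z ∂m, ‖G z‖ = 1) {g : ℂ → ℂ} (hg : Integrable g m) :
    ∫ z, conj z * g (G z) ∂m = deriv f 0 * ∫ z, conj z * g z ∂m := by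
  have hmp := hG.measurePreserving h0 hGm hG1
  have hfd : DifferentiableAt ℂ f 0 :=
    hG.differentiableOn.differentiableAt (ball_mem_nhds _ one_pos)
  have hpos : ∀ n : ℕ, ∫ z, conj z * G z ^ n ∂m = ∫ z, deriv f 0 * conj z * z ^ n ∂m := fun n => by
    simp only [mul_assoc, integral_const_mul]
    rw [(hG.pow n).integral_conj_mul, (isRadialLimit_id.pow n).integral_conj_mul,
      deriv_fun_pow hfd, deriv_fun_pow differentiableAt_fun_id, h0, deriv_id'']
    ring
  have hneg : ∀ n : ℕ, ∫ z, conj z * conj (G z ^ n) ∂m =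
      ∫ z, deriv f 0 * conj z * conj (z ^ n) ∂m := fun n => by
    simp only [mul_assoc, integral_const_mul, ← map_mul, integral_conj]
    rw [(hG.pow n).integral_id_mul, (isRadialLimit_id.pow n).integral_id_mul]
    simp
  have hint : ∀ {k : ℂ → ℂ}, Integrable k m → Integrable (fun z => conj z * k z) m := fun hk => by
    refine hk.bdd_mul (c := 1) (by fun_prop) ?_
    filter_upwards [ae_norm_eq_one] with z hz
    simp [hz]
  have hle : ∀ k : ℂ → ℂ, Integrable k m → ‖∫ z, conj z * k z ∂m‖ ≤ ∫ z, ‖k z‖ ∂m := fun k hk => by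
    refine norm_integral_le_of_norm_le hk.norm ?_
    filter_upwards [ae_norm_eq_one] with z hz
    simp [hz]
  have hkey : ∀ ε > 0, ‖∫ z, conj z * g (G z) ∂m - deriv f 0 * ∫ z, conj z * g z ∂m‖ ≤
      (1 + ‖deriv f 0‖) * ε := by
    intro ε hε
    obtain ⟨k, hk, hki⟩ := hg.exists_boundedContinuous_integral_sub_le hε
    have hcont := integral_mul_comp_eq (Ψ := fun z => z) integrable_conj_m
      (integrable_conj_m.const_mul (deriv f 0)) hGm measurable_id hG1 ae_norm_eq_one hpos hneg
      k.continuous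
    simp only [mul_assoc, integral_const_mul] at hcont
    have hd : Integrable (fun z => g z - k z) m := hg.sub hki
    have hdG : Integrable (fun z => g (G z) - k (G z)) m := hmp.integrable_comp_of_integrable hd
    have hnorm : ∫ z, ‖g (G z) - k (G z)‖ ∂m = ∫ z, ‖g z - k z‖ ∂m := by
      conv_rhs => rw [← hmp.map_eq]
      rw [integral_map hGm.aemeasurable]
      rw [hmp.map_eq]
      exact hd.norm.aestronglyMeasurable
    have e1 : ∫ z, conj z * (g (G z) - k (G z)) ∂m =
        ∫ z, conj z * g (G z) ∂m - ∫ z, conj z * k (G z) ∂m := by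
      simp only [mul_sub]
      exact integral_sub (hint (hmp.integrable_comp_of_integrable hg))
        (hint (hmp.integrable_comp_of_integrable hki))
    have e2 : ∫ z, conj z * (g z - k z) ∂m = ∫ z, conj z * g z ∂m - ∫ z, conj z * k z ∂m := by
      simp only [mul_sub]
      exact integral_sub (hint hg) (hint hki)
    have e3 : ∫ z, conj z * g (G z) ∂m - deriv f 0 * ∫ z, conj z * g z ∂m =
        ∫ z, conj z * (g (G z) - k (G z)) ∂m - deriv f 0 * ∫ z, conj z * (g z - k z) ∂m := by
      rw [e1, e2, hcont]
      ring
    rw [e3]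
    refine (norm_sub_le _ _).trans ?_
    rw [norm_mul, add_mul, one_mul]
    gcongr
    · exact (hle _ hdG).trans (hnorm.trans_le hk)
    · exact (hle _ hd).trans hk
  have hpos' : 0 < 1 + ‖deriv f 0‖ := by positivity
  rw [← sub_eq_zero, ← norm_le_zero_iff]
  refine le_of_forall_pos_le_add fun ε hε => ?_
  have := hkey (ε / (1 + ‖deriv f 0‖)) (by positivity)
  rwa [mul_div_cancel₀ _ hpos'.ne', ← zero_add ε] at this

lemma ae_norm_iterate_eq_one {G : ℂ → ℂ} (hG : MeasurePreserving G m m) (n : ℕ) :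
    ∀ᵐ z ∂m, ‖G^[n] z‖ = 1 :=
  (hG.iterate n).quasiMeasurePreserving.ae ae_norm_eq_one

lemma integrable_iterate {G : ℂ → ℂ} (hG : MeasurePreserving G m m) (n : ℕ) :
    Integrable (G^[n]) m :=
  integrable_of_bounded (hG.iterate n).measurable.aestronglyMeasurable 1
    ((ae_norm_iterate_eq_one hG n).mono fun _ hz => hz.le)

lemma integral_conj_mul_iterate {f G : ℂ → ℂ} (hG : IsRadialLimit f G) (h0 : f 0 = 0)
    (hGm : Measurable G) (hG1 : ∀ᵐ z ∂m, ‖G z‖ = 1) (n : ℕ) :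
    ∫ z, conj z * G^[n] z ∂m = deriv f 0 ^ n := by
  induction n with
  | zero =>
    have := isRadialLimit_id.integral_conj_mul
    simpa using this
  | succ n ih =>
    simp only [Function.iterate_succ_apply]
    rw [hG.integral_conj_mul_comp h0 hGm hG1
      (integrable_iterate (hG.measurePreserving h0 hGm hG1) n), ih, pow_succ']

lemma iterate_ae_eq {F G : ℂ → ℂ} (hG : MeasurePreserving G m m) (h : F =ᵐ[m] G) (n : ℕ) :
    F^[n] =ᵐ[m] G^[n] := by
  induction n with
  | zero => rfl
  | succ n ih =>
    filter_upwards [h, hG.quasiMeasurePreserving.ae ih] with z h1 h2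
    rw [Function.iterate_succ_apply, Function.iterate_succ_apply, h1, h2]

theorem stmt1 (f F : ℂ → ℂ)
    (hf : DifferentiableOn ℂ f (Metric.ball 0 1))
    (hmap : Set.MapsTo f (Metric.ball 0 1) (Metric.ball 0 1))
    (h0 : f 0 = 0)
    (hbd : ∀ᵐ z ∂m, Filter.Tendsto (fun r : ℝ => f ((r : ℂ) * z))
      (nhdsWithin 1 (Set.Iio 1)) (nhds (F z)))
    (hinner : ∀ᵐ z ∂m, ‖F z‖ = 1)
    (k j : ℕ) (hk : 0 < k) (hkj : k < j) :
    ∫ z, (starRingEnd ℂ) (F^[k] z) * F^[j] z ∂m = (deriv f 0) ^ (j - k) := by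
  have hF : IsRadialLimit f F := ⟨hf, fun z hz => (mem_ball_zero_iff.1 (hmap hz)).le, hbd⟩
  obtain ⟨G, hGm, hFG⟩ := hF.aemeasurable
  have hG := hF.congr_ae hFG
  have hG1 : ∀ᵐ z ∂m, ‖G z‖ = 1 := by
    filter_upwards [hinner, hFG] with z h1 h2
    rwa [← h2]
  have hmp := hG.measurePreserving h0 hGm hG1
  obtain ⟨d, rfl⟩ := Nat.exists_eq_add_of_le hkj.le
  have hFG' : (fun z => conj (F^[k] z) * F^[k + d] z) =ᵐ[m]
      fun z => conj (G^[k] z) * G^[d] (G^[k] z) := by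
    filter_upwards [iterate_ae_eq hmp hFG k, iterate_ae_eq hmp hFG (k + d)] with z h1 h2
    rw [h1, h2, add_comm k d, Function.iterate_add_apply]
  have hmeas : Measurable fun z => conj z * G^[d] z :=
    continuous_conj.measurable.mul (hmp.iterate d).measurable
  rw [integral_congr_ae hFG', Nat.add_sub_cancel_left,
    ← integral_conj_mul_iterate hG h0 hGm hG1 d]
  conv_rhs => rw [← (hmp.iterate k).map_eq]
  rw [integral_map (hmp.iterate k).measurable.aemeasurable hmeas.aestronglyMeasurable]
end

section
/- Let f be an inner function with f(0)=0 which is not a rotation, and ε_1,ε_2,ε_3 ∈ {1,−1}. There is a constant C=C(f)>0 such that for all positive integers n_1<n_2<n_3, |∫_{∂𝔻} f^{ε_1 n_1}·(f^{ε_2 n_2})²·f^{ε_3 n_3} dm| ≤ C·|f'(0)|^{n_3−n_1}. -/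
open MeasureTheory Set Metric Filter Complex

open AddCircle Topology ComplexConjugate

instance fact_two_pi_pos : Fact (0 < 2 * Real.pi) := ⟨Real.two_pi_pos⟩

/-- The inclusion of the additive circle of length `2π` in the complex plane. -/
noncomputable abbrev circleIncl (x : AddCircle (2 * Real.pi)) : ℂ := fourier 1 x

lemma circleIncl_coe (θ : ℝ) :
    circleIncl (θ : AddCircle (2 * Real.pi)) = Complex.exp (θ * Complex.I) := by
  have : (2 * Real.pi : ℂ) ≠ 0 := by exact_mod_cast Real.two_pi_pos.ne'
  rw [circleIncl, fourier_coe_apply]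
  congr 1
  push_cast
  field_simp

lemma norm_fourier_apply (n : ℤ) (x : AddCircle (2 * Real.pi)) : ‖fourier n x‖ = 1 := by
  rw [fourier_apply, Circle.norm_coe]

lemma fourier_natCast_eq_pow (n : ℕ) (x : AddCircle (2 * Real.pi)) :
    fourier (n : ℤ) x = circleIncl x ^ n := by
  induction n with
  | zero => simp
  | succ k ih => rw [Nat.cast_succ, fourier_add, ih, pow_succ]

lemma measurableEmbedding_circleIncl : MeasurableEmbedding circleIncl := by
  refine (Continuous.isClosedEmbedding (by unfold circleIncl; fun_prop) ?_).measurableEmbedding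
  intro x y h
  simp only [circleIncl, fourier_one] at h
  exact injective_toCircle Real.two_pi_pos.ne' (Subtype.ext h)

lemma m_eq_map : m = Measure.map circleIncl haarAddCircle := by
  have h1 := (AddCircle.measurePreserving_mk (2 * Real.pi) 0).map_eq
  have hT : ENNReal.ofReal (2 * Real.pi) ≠ 0 := by
    simpa using Real.two_pi_pos
  have h2 : (haarAddCircle : Measure (AddCircle (2 * Real.pi))) =
      (ENNReal.ofReal (2 * Real.pi))⁻¹ • volume := by
    rw [volume_eq_smul_haarAddCircle, smul_smul, ENNReal.inv_mul_cancel hT ENNReal.ofReal_ne_top,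
      one_smul]
  rw [h2, ← h1, Measure.map_smul, Measure.map_map measurableEmbedding_circleIncl.measurable
    (AddCircle.measurable_mk'), m, zero_add]
  congr 2
  ext θ
  exact (circleIncl_coe θ).symm

lemma ae_m_iff {p : ℂ → Prop} : (∀ᵐ z ∂m, p z) ↔ ∀ᵐ x ∂haarAddCircle, p (circleIncl x) := by
  rw [m_eq_map, measurableEmbedding_circleIncl.ae_map_iff]

lemma integral_m (g : ℂ → ℂ) : ∫ z, g z ∂m = ∫ x, g (circleIncl x) ∂haarAddCircle := by
  rw [m_eq_map, measurableEmbedding_circleIncl.integral_map]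

lemma integral_circleIncl_eq_circleAverage (h : ℂ → ℂ) (r : ℝ) :
    ∫ x, h (r * circleIncl x) ∂haarAddCircle = Real.circleAverage h 0 r := by
  rw [integral_haarAddCircle, Real.circleAverage_def,
    ← AddCircle.intervalIntegral_preimage (2 * Real.pi) 0, zero_add]
  congr 1
  refine intervalIntegral.integral_congr fun θ _ => ?_
  simp only [circleIncl_coe, circleMap, zero_add]

/-- Mean value property for radial boundary values, under a domination hypothesis. -/
lemma integral_radial_limit {h : ℂ → ℂ} {K : AddCircle (2 * Real.pi) → ℂ} {B : ℝ}
    (hh : DifferentiableOn ℂ h (ball 0 1)) (hB : ∀ w ∈ ball (0 : ℂ) 1, ‖h w‖ ≤ B)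
    (hK : ∀ᵐ x ∂haarAddCircle,
      Tendsto (fun r : ℝ => h (r * circleIncl x)) (𝓝[<] 1) (𝓝 (K x))) :
    ∫ x, K x ∂haarAddCircle = h 0 := by
  have hmem : ∀ᶠ r : ℝ in 𝓝[<] 1, 0 < r ∧ r < 1 := by
    filter_upwards [Ioo_mem_nhdsLT (zero_lt_one' ℝ)] with r hr using hr
  have hball : ∀ r : ℝ, 0 < r ∧ r < 1 → ∀ x, (r : ℂ) * circleIncl x ∈ ball (0 : ℂ) 1 := by
    intro r hr x
    rw [mem_ball_zero_iff, norm_mul, norm_fourier_apply, mul_one, Complex.norm_real,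
      Real.norm_of_nonneg hr.1.le]
    exact hr.2
  have hlim := tendsto_integral_filter_of_dominated_convergence (μ := haarAddCircle)
    (l := 𝓝[<] (1 : ℝ)) (F := fun (r : ℝ) x => h (r * circleIncl x)) (f := K) (fun _ => B)
    (by
      filter_upwards [hmem] with r hr
      refine Continuous.aestronglyMeasurable ?_
      refine hh.continuousOn.comp_continuous (by unfold circleIncl; fun_prop) (hball r hr))
    (by
      filter_upwards [hmem] with r hr
      exact Eventually.of_forall fun x => hB _ (hball r hr x))
    (integrable_const _) hK
  refine tendsto_nhds_unique hlim (tendsto_const_nhds.congr' ?_)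
  filter_upwards [hmem] with r hr
  rw [integral_circleIncl_eq_circleAverage]
  refine (DiffContOnCl.circleAverage ?_).symm
  refine DifferentiableOn.diffContOnCl_ball (U := ball 0 1) hh ?_
  rw [abs_of_pos hr.1]
  exact closedBall_subset_ball hr.2

/-- Finite measures on the circle are determined by their Fourier coefficients. -/
lemma measure_addCircle_ext {P Q : Measure (AddCircle (2 * Real.pi))} [IsFiniteMeasure P]
    [IsFiniteMeasure Q] (h : ∀ k : ℤ, ∫ x, fourier k x ∂P = ∫ x, fourier k x ∂Q) : P = Q := by
  have hint : ∀ (R : Measure (AddCircle (2 * Real.pi))) [IsFiniteMeasure R]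
      (g : C(AddCircle (2 * Real.pi), ℂ)), Integrable g R := by
    intro R _ g
    exact g.continuous.integrable_of_hasCompactSupport (HasCompactSupport.of_compactSpace g)
  refine ext_of_forall_mem_subalgebra_integral_eq_of_pseudoEMetric_complete_countable
    (A := (fourierSubalgebra (T := 2 * Real.pi)).comap
      (BoundedContinuousFunction.toContinuousMapStarₐ ℂ)) ?_ ?_
  · intro x y hxy
    obtain ⟨_, ⟨g, hg, rfl⟩, hne⟩ := fourierSubalgebra_separatesPoints (T := 2 * Real.pi) hxy
    refine ⟨g, ⟨g, ⟨BoundedContinuousFunction.mkOfCompact g, hg, rfl⟩, rfl⟩, hne⟩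
  · intro g hg
    have hg' : (g : C(AddCircle (2 * Real.pi), ℂ)) ∈
        Submodule.span ℂ (range (fourier (T := 2 * Real.pi))) := by
      rw [← fourierSubalgebra_coe]
      exact hg
    have key : ∀ q ∈ Submodule.span ℂ (range (fourier (T := 2 * Real.pi))),
        ∫ x, q x ∂P = ∫ x, q x ∂Q := by
      intro q hq
      induction hq using Submodule.span_induction with
      | mem q hq =>
        obtain ⟨k, rfl⟩ := hq
        exact h k
      | zero => simp
      | add q r _ _ hq hr =>
        simp only [ContinuousMap.add_apply]
        rw [integral_add (hint P q) (hint P r), integral_add (hint Q q) (hint Q r), hq, hr]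
      | smul a q _ hq =>
        simp only [ContinuousMap.smul_apply]
        rw [integral_smul, integral_smul, hq]
    exact key _ hg'

lemma integral_fourier (k : ℤ) :
    ∫ x : AddCircle (2 * Real.pi), fourier k x ∂haarAddCircle = if k = 0 then 1 else 0 := by
  have := congrFun (fourierCoeff_fourier (T := 2 * Real.pi) k) 0
  simp only [fourierCoeff, neg_zero, fourier_zero, one_smul] at this
  rw [this, Pi.single_apply]
  simp [eq_comm]

lemma integral_conj_fourier_mul (k l : ℤ) :
    ∫ x : AddCircle (2 * Real.pi), fourier (-k) x * fourier l x ∂haarAddCircle =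
      if l = k then 1 else 0 := by
  simp only [← fourier_add]
  rw [integral_fourier]
  congr 1
  simp only [eq_iff_iff]
  constructor <;> intro h <;> linarith

lemma fourier_neg_apply_eq_conj (k : ℤ) (x : AddCircle (2 * Real.pi)) :
    fourier (-k) x = conj (fourier k x) := fourier_neg

section CircleMap

variable {G : AddCircle (2 * Real.pi) → AddCircle (2 * Real.pi)}

lemma measurePreserving_of_integral_fourier_comp (hG : Measurable G)
    (h : ∀ k : ℕ, 0 < k → ∫ x, fourier (k : ℤ) (G x) ∂haarAddCircle = 0) :
    MeasurePreserving G haarAddCircle haarAddCircle := by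
  refine ⟨hG, ?_⟩
  have := Measure.isProbabilityMeasure_map (μ := haarAddCircle) hG.aemeasurable
  refine measure_addCircle_ext fun k => ?_
  rw [integral_map hG.aemeasurable (fourier k).continuous.aestronglyMeasurable, integral_fourier]
  obtain ⟨n, rfl | rfl⟩ := k.eq_nat_or_neg
  · rcases Nat.eq_zero_or_pos n with rfl | hn
    · simp
    · rw [h n hn, if_neg (by positivity)]
  · rcases Nat.eq_zero_or_pos n with rfl | hn
    · simp
    · simp only [fourier_neg_apply_eq_conj]
      rw [integral_conj, h n hn, if_neg (by simpa using hn.ne'), map_zero]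

/-- Transfer of negative Fourier modes under composition with `G`, in `L²`. -/
lemma integral_conj_fourier_mul_comp (hG : MeasurePreserving G haarAddCircle haarAddCircle)
    (hpos : ∀ n k : ℕ, 0 < n → ∫ x, fourier (n : ℤ) x * fourier (k : ℤ) (G x) ∂haarAddCircle = 0)
    (hneg : ∀ n k : ℕ, n < k → ∫ x, fourier (-n : ℤ) x * fourier (k : ℤ) (G x) ∂haarAddCircle = 0)
    {n : ℕ} (hn : 0 < n) {φ : AddCircle (2 * Real.pi) → ℂ} (hφ : MemLp φ 2 haarAddCircle) :
    ∫ x, fourier (-n : ℤ) x * φ (G x) ∂haarAddCircle =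
      ∑ k ∈ Finset.Icc 1 n, (∫ x, fourier (-n : ℤ) x * fourier (k : ℤ) (G x) ∂haarAddCircle) *
        ∫ x, fourier (-k : ℤ) x * φ x ∂haarAddCircle := by
  have hinner : ∀ (k : ℤ) (ψ : AddCircle (2 * Real.pi) → ℂ) (u : Lp ℂ 2 haarAddCircle),
      u =ᵐ[haarAddCircle] ψ → inner ℂ (fourierLp 2 k) u =
        ∫ x, fourier (-k) x * ψ x ∂haarAddCircle := by
    intro k ψ u hu
    rw [L2.inner_def]
    refine integral_congr_ae ?_
    filter_upwards [coeFn_fourierLp 2 k, hu] with x h1 h2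
    rw [h1, h2, fourier_neg_apply_eq_conj, RCLike.inner_apply, mul_comm]
  let V := (Lp.compMeasurePreservingₗᵢ (E := ℂ) (p := 2) ℂ G hG).toContinuousLinearMap
  have hV : ∀ (ψ : AddCircle (2 * Real.pi) → ℂ) (u : Lp ℂ 2 haarAddCircle),
      u =ᵐ[haarAddCircle] ψ → V u =ᵐ[haarAddCircle] ψ ∘ G := by
    intro ψ u hu
    exact (Lp.coeFn_compMeasurePreserving u hG).trans (hG.quasiMeasurePreserving.ae_eq_comp hu)
  have hfun : (innerSL ℂ (fourierLp 2 (n : ℤ))).comp V =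
      ∑ k ∈ Finset.Icc 1 n, (∫ x, fourier (-n : ℤ) x * fourier (k : ℤ) (G x) ∂haarAddCircle) •
        innerSL ℂ (fourierLp (T := 2 * Real.pi) 2 (k : ℤ)) := by
    refine ContinuousLinearMap.ext_on (s := range (fourierLp (T := 2 * Real.pi) 2)) ?_ ?_
    · rw [Submodule.dense_iff_topologicalClosure_eq_top]
      exact span_fourierLp_closure_eq_top ENNReal.ofNat_ne_top
    · rintro _ ⟨j, rfl⟩
      simp only [ContinuousLinearMap.comp_apply, innerSL_apply_apply, _root_.sum_apply,
        _root_.smul_apply, smul_eq_mul]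
      rw [hinner _ _ _ (hV _ _ (coeFn_fourierLp 2 j))]
      simp only [hinner _ _ _ (coeFn_fourierLp 2 j), integral_conj_fourier_mul, Function.comp_apply]
      obtain ⟨l, rfl | rfl⟩ := j.eq_nat_or_neg
      · simp only [Nat.cast_inj, mul_ite, mul_one, mul_zero, Finset.sum_ite_eq, Finset.mem_Icc]
        split_ifs with hl
        · rfl
        · rcases Nat.eq_zero_or_pos l with rfl | hl0
          · have := hpos n 0 hn
            simp only [Nat.cast_zero, fourier_zero, mul_one] at this ⊢
            simp only [fourier_neg_apply_eq_conj]
            rw [integral_conj, this, map_zero]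
          · exact hneg n l (by omega)
      · rw [Finset.sum_eq_zero]
        · simp only [fourier_neg_apply_eq_conj, ← map_mul]
          rw [integral_conj, hpos n l hn, map_zero]
        · intro k hk
          rw [if_neg, mul_zero]
          have := (Finset.mem_Icc.1 hk).1
          omega
  have := congrArg (fun L => L (hφ.toLp φ)) hfun
  simp only [ContinuousLinearMap.comp_apply, innerSL_apply_apply, _root_.sum_apply,
        _root_.smul_apply, smul_eq_mul] at this
  rw [hinner _ _ _ (hV _ _ hφ.coeFn_toLp)] at this
  simpa only [hinner _ _ _ hφ.coeFn_toLp, Function.comp_apply] using this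

lemma memLp_of_norm_le_one {φ : AddCircle (2 * Real.pi) → ℂ} (hφ : Measurable φ)
    (hb : ∀ x, ‖φ x‖ ≤ 1) (p : ENNReal) : MemLp φ p haarAddCircle :=
  MemLp.of_bound hφ.aestronglyMeasurable 1 (Eventually.of_forall hb)

/-- Correlations of a bounded observable with the first negative mode scale exactly by `c ^ b`. -/
lemma integral_conj_fourier_one_mul_iterate
    (hG : MeasurePreserving G haarAddCircle haarAddCircle)
    (hpos : ∀ n k : ℕ, 0 < n → ∫ x, fourier (n : ℤ) x * fourier (k : ℤ) (G x) ∂haarAddCircle = 0)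
    (hneg : ∀ n k : ℕ, n < k → ∫ x, fourier (-n : ℤ) x * fourier (k : ℤ) (G x) ∂haarAddCircle = 0)
    {c : ℂ} (hdiag : ∀ n : ℕ,
      ∫ x, fourier (-n : ℤ) x * fourier (n : ℤ) (G x) ∂haarAddCircle = c ^ n)
    {φ : AddCircle (2 * Real.pi) → ℂ} (hφ : Measurable φ) (hb : ∀ x, ‖φ x‖ ≤ 1) (b : ℕ) :
    ∫ x, fourier (-(1 : ℕ) : ℤ) x * φ (G^[b] x) ∂haarAddCircle =
      c ^ b * ∫ x, fourier (-(1 : ℕ) : ℤ) x * φ x ∂haarAddCircle := by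
  induction b with
  | zero => simp
  | succ b ih =>
    have h := integral_conj_fourier_mul_comp hG hpos hneg one_pos
      (memLp_of_norm_le_one (hφ.comp (hG.measurable.iterate b)) (fun x => hb _) 2)
    simp only [Function.comp_apply, ← Function.iterate_succ_apply] at h
    rw [h, Finset.Icc_self, Finset.sum_singleton, hdiag, ih]
    ring

/-- Correlations of bounded observables with a fixed negative mode decay like `‖c‖ ^ b`. -/
lemma exists_norm_integral_conj_fourier_mul_iterate_le
    (hG : MeasurePreserving G haarAddCircle haarAddCircle)
    (hpos : ∀ n k : ℕ, 0 < n → ∫ x, fourier (n : ℤ) x * fourier (k : ℤ) (G x) ∂haarAddCircle = 0)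
    (hneg : ∀ n k : ℕ, n < k → ∫ x, fourier (-n : ℤ) x * fourier (k : ℤ) (G x) ∂haarAddCircle = 0)
    {c : ℂ} (hdiag : ∀ n : ℕ,
      ∫ x, fourier (-n : ℤ) x * fourier (n : ℤ) (G x) ∂haarAddCircle = c ^ n)
    (hc0 : 0 < ‖c‖) (hc1 : ‖c‖ < 1) (n : ℕ) (hn : 0 < n) :
    ∃ K : ℝ, 0 < K ∧ ∀ φ : AddCircle (2 * Real.pi) → ℂ, Measurable φ → (∀ x, ‖φ x‖ ≤ 1) →
      ∀ b : ℕ, ‖∫ x, fourier (-n : ℤ) x * φ (G^[b] x) ∂haarAddCircle‖ ≤ K * ‖c‖ ^ b := by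
  induction n using Nat.strong_induction_on with
  | _ n ih =>
  obtain ⟨p, rfl⟩ : ∃ p, n = p + 1 := ⟨n - 1, by omega⟩
  have hbase : ∀ φ : AddCircle (2 * Real.pi) → ℂ, (∀ x, ‖φ x‖ ≤ 1) →
      ‖∫ x, fourier (-(p + 1 : ℕ) : ℤ) x * φ x ∂haarAddCircle‖ ≤ 1 := by
    intro φ hb
    have := norm_integral_le_of_norm_le_const (μ := haarAddCircle)
      (f := fun x : AddCircle (2 * Real.pi) => fourier (-(p + 1 : ℕ) : ℤ) x * φ x) (C := 1)
      (Eventually.of_forall fun x => by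
        rw [norm_mul, norm_fourier_apply, one_mul]
        exact hb x)
    simpa using this
  rcases Nat.eq_zero_or_pos p with rfl | hp
  · refine ⟨1, one_pos, fun φ hφ hb b => ?_⟩
    rw [zero_add, integral_conj_fourier_one_mul_iterate hG hpos hneg hdiag hφ hb, norm_mul, norm_pow,
      one_mul]
    exact mul_le_of_le_one_right (by positivity) (by simpa using hbase φ hb)
  choose! K hK0 hK using ih
  set coef : ℕ → ℂ := fun k =>
    ∫ x, fourier (-(p + 1 : ℕ) : ℤ) x * fourier (k : ℤ) (G x) ∂haarAddCircle
  set M : ℝ := ∑ k ∈ Finset.Icc 1 p, ‖coef k‖ * K k with hM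
  have hM0 : 0 ≤ M := Finset.sum_nonneg fun k hk => by
    have := Finset.mem_Icc.1 hk
    exact mul_nonneg (norm_nonneg _) (hK0 k (by omega) (by omega)).le
  have hd : 0 < ‖c‖ - ‖c‖ ^ 2 := by nlinarith
  refine ⟨1 + M / (‖c‖ - ‖c‖ ^ 2), by positivity, fun φ hφ hb b => ?_⟩
  set Q : ℝ := 1 + M / (‖c‖ - ‖c‖ ^ 2) with hQ
  have hQ1 : 1 ≤ Q := le_add_of_nonneg_right (by positivity)
  have hQM : ‖c‖ ^ 2 * Q + M ≤ Q * ‖c‖ := by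
    have : M = M / (‖c‖ - ‖c‖ ^ 2) * (‖c‖ - ‖c‖ ^ 2) := (div_mul_cancel₀ M hd.ne').symm
    have : Q * (‖c‖ - ‖c‖ ^ 2) = (‖c‖ - ‖c‖ ^ 2) + M := by rw [hQ, add_mul, one_mul, ← this]
    nlinarith
  induction b with
  | zero =>
    simpa using (hbase φ hb).trans hQ1
  | succ b ihb =>
    have h := integral_conj_fourier_mul_comp hG hpos hneg p.succ_pos
      (memLp_of_norm_le_one (hφ.comp (hG.measurable.iterate b)) (fun x => hb _) 2)
    simp only [Function.comp_apply, ← Function.iterate_succ_apply, Nat.succ_eq_add_one] at h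
    rw [h, Finset.sum_Icc_succ_top (by omega), hdiag]
    have hsum : ‖∑ k ∈ Finset.Icc 1 p, coef k *
        ∫ x, fourier (-k : ℤ) x * φ (G^[b] x) ∂haarAddCircle‖ ≤ M * ‖c‖ ^ b := by
      rw [hM, Finset.sum_mul]
      refine norm_sum_le_of_le _ fun k hk => ?_
      have := Finset.mem_Icc.1 hk
      rw [norm_mul, mul_assoc]
      exact mul_le_mul_of_nonneg_left (hK k (by omega) (by omega) φ hφ hb b) (norm_nonneg _)
    have hlast : ‖c ^ (p + 1) * ∫ x, fourier (-(p + 1 : ℕ) : ℤ) x * φ (G^[b] x) ∂haarAddCircle‖ ≤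
        ‖c‖ ^ 2 * (Q * ‖c‖ ^ b) := by
      rw [norm_mul, norm_pow]
      refine mul_le_mul ?_ ihb (norm_nonneg _) (by positivity)
      exact pow_le_pow_of_le_one hc0.le hc1.le (by omega)
    calc _ ≤ M * ‖c‖ ^ b + ‖c‖ ^ 2 * (Q * ‖c‖ ^ b) := (norm_add_le _ _).trans (add_le_add hsum hlast)
      _ = (‖c‖ ^ 2 * Q + M) * ‖c‖ ^ b := by ring
      _ ≤ Q * ‖c‖ * ‖c‖ ^ b := by gcongr
      _ = Q * ‖c‖ ^ (b + 1) := by ring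

lemma norm_integral_conj_eq {α : Type*} [MeasurableSpace α] {μ : Measure α} {u v : α → ℂ}
    (h : ∀ x, u x = conj (v x)) : ‖∫ x, u x ∂μ‖ = ‖∫ x, v x ∂μ‖ := by
  simp only [h]
  rw [integral_conj, RCLike.norm_conj]

/-- The triple correlation bound for a measure preserving circle map with triangular transfer. -/
lemma exists_norm_integral_triple_le
    (hG : MeasurePreserving G haarAddCircle haarAddCircle)
    (hpos : ∀ n k : ℕ, 0 < n → ∫ x, fourier (n : ℤ) x * fourier (k : ℤ) (G x) ∂haarAddCircle = 0)
    (hneg : ∀ n k : ℕ, n < k → ∫ x, fourier (-n : ℤ) x * fourier (k : ℤ) (G x) ∂haarAddCircle = 0)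
    {c : ℂ} (hdiag : ∀ n : ℕ,
      ∫ x, fourier (-n : ℤ) x * fourier (n : ℤ) (G x) ∂haarAddCircle = c ^ n)
    (hc1 : ‖c‖ < 1) :
    ∃ C : ℝ, 0 < C ∧ ∀ ε₁ ε₂ ε₃ : ℤ,
      (ε₁ = 1 ∨ ε₁ = -1) → (ε₂ = 1 ∨ ε₂ = -1) →
      ∀ n₁ n₂ n₃ : ℕ, n₁ < n₂ → n₂ < n₃ →
        ‖∫ x, fourier ε₁ (G^[n₁] x) * (fourier ε₂ (G^[n₂] x)) ^ 2 * fourier ε₃ (G^[n₃] x)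
          ∂haarAddCircle‖ ≤ C * ‖c‖ ^ (n₃ - n₁) := by
  have hmeas : ∀ (k : ℤ) (n : ℕ), Measurable fun x => fourier k (G^[n] x) := fun k n =>
    (fourier k).continuous.measurable.comp (hG.measurable.iterate n)
  have hlast : ∃ C : ℝ, 0 < C ∧ (c = 0 ∨ ∀ ε₂ ε₃ : ℤ, (ε₂ = 1 ∨ ε₂ = -1) → ∀ b : ℕ,
      ‖∫ x, fourier (-(1 : ℕ) : ℤ) x * (fourier ε₂ x ^ 2 * fourier ε₃ (G^[b] x)) ∂haarAddCircle‖ ≤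
        C * ‖c‖ ^ b) := by
    rcases eq_or_ne c 0 with hc | hc
    · exact ⟨1, one_pos, Or.inl hc⟩
    obtain ⟨K, hK0, hK⟩ := exists_norm_integral_conj_fourier_mul_iterate_le hG hpos hneg hdiag
      (norm_pos_iff.2 hc) hc1 1 one_pos
    obtain ⟨K', hK0', hK'⟩ := exists_norm_integral_conj_fourier_mul_iterate_le hG hpos hneg hdiag
      (norm_pos_iff.2 hc) hc1 3 (by norm_num)
    refine ⟨K + K', by positivity, Or.inr ?_⟩
    rintro ε₂ ε₃ (rfl | rfl) b
    · have := hK (fourier (-ε₃)) (fourier (-ε₃)).continuous.measurable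
        (fun x => (norm_fourier_apply _ x).le) b
      refine le_trans (le_of_eq ?_) (this.trans (by gcongr; linarith))
      refine norm_integral_conj_eq fun x => ?_
      rw [map_mul, ← fourier_neg_apply_eq_conj, ← fourier_neg_apply_eq_conj, neg_neg, neg_neg,
        ← mul_assoc, pow_two, ← fourier_add, ← fourier_add]
      norm_num
    · have := hK' (fourier ε₃) (fourier ε₃).continuous.measurable
        (fun x => (norm_fourier_apply _ x).le) b
      refine le_trans (le_of_eq ?_) (this.trans (by gcongr; linarith))
      congr 1
      refine integral_congr_ae (Eventually.of_forall fun x => ?_)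
      simp only [← mul_assoc, pow_two, ← fourier_add]
      norm_num
  obtain ⟨C, hC0, hC⟩ := hlast
  have hmain : ∀ ε₂ ε₃ : ℤ, (ε₂ = 1 ∨ ε₂ = -1) → ∀ n₁ n₂ n₃ : ℕ, n₁ < n₂ → n₂ < n₃ →
      ‖∫ x, fourier (-1) (G^[n₁] x) * (fourier ε₂ (G^[n₂] x)) ^ 2 * fourier ε₃ (G^[n₃] x)
        ∂haarAddCircle‖ ≤ C * ‖c‖ ^ (n₃ - n₁) := by
    intro ε₂ ε₃ h₂ n₁ n₂ n₃ h12 h23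
    obtain ⟨a, rfl⟩ := Nat.exists_eq_add_of_lt h12
    obtain ⟨b, rfl⟩ := Nat.exists_eq_add_of_lt h23
    let ψ : AddCircle (2 * Real.pi) → ℂ := fun x => fourier ε₂ x ^ 2 * fourier ε₃ (G^[b + 1] x)
    have hψ : Measurable ψ := ((hmeas ε₂ 0).pow_const 2).mul (hmeas ε₃ (b + 1))
    have hψ1 : ∀ x, ‖ψ x‖ ≤ 1 := fun x => by
      simp only [ψ, norm_mul, norm_pow, norm_fourier_apply, one_pow, mul_one, le_refl]
    have hshift : ∫ x, fourier (-1) (G^[n₁] x) * (fourier ε₂ (G^[n₁ + a + 1] x)) ^ 2 *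
          fourier ε₃ (G^[n₁ + a + 1 + b + 1] x) ∂haarAddCircle =
        ∫ x, fourier (-(1 : ℕ) : ℤ) x * ψ (G^[a + 1] x) ∂haarAddCircle := by
      conv_rhs => rw [← (hG.iterate n₁).map_eq]
      have hm : Measurable fun x => fourier (-(1 : ℕ) : ℤ) x * ψ (G^[a + 1] x) :=
        (hmeas _ 0).mul (hψ.comp (hG.measurable.iterate _))
      rw [integral_map (hG.measurable.iterate n₁).aemeasurable hm.aestronglyMeasurable]
      refine integral_congr_ae (Eventually.of_forall fun x => ?_)
      simp only [ψ, ← Function.iterate_add_apply, Nat.cast_one, mul_assoc]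
      rw [show n₁ + a + 1 = a + 1 + n₁ by ring,
        show a + 1 + n₁ + b + 1 = b + 1 + (a + 1 + n₁) by ring]
    rw [hshift, integral_conj_fourier_one_mul_iterate hG hpos hneg hdiag hψ hψ1, norm_mul, norm_pow,
      show n₁ + a + 1 + b + 1 - n₁ = (a + 1) + (b + 1) by omega]
    rcases hC with rfl | hC
    · simp
    · calc _ ≤ ‖c‖ ^ (a + 1) * (C * ‖c‖ ^ (b + 1)) := by
            gcongr
            exact hC ε₂ ε₃ h₂ (b + 1)
        _ = _ := by ring
  refine ⟨C, hC0, ?_⟩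
  rintro ε₁ ε₂ ε₃ (rfl | rfl) h₂ n₁ n₂ n₃ h12 h23
  · refine le_trans (le_of_eq ?_) (hmain (-ε₂) (-ε₃) (by omega) n₁ n₂ n₃ h12 h23)
    refine norm_integral_conj_eq fun x => ?_
    simp only [map_mul, map_pow, ← fourier_neg_apply_eq_conj, neg_neg]
  · exact hmain ε₂ ε₃ h₂ n₁ n₂ n₃ h12 h23

/-- The boundary map of an inner function, as a measurable self-map of the additive circle. -/
lemma exists_measurable_circle_map {f F : ℂ → ℂ} (hf : DifferentiableOn ℂ f (ball 0 1))
    (hbd : ∀ᵐ x ∂haarAddCircle,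
      Tendsto (fun r : ℝ => f (r * circleIncl x)) (𝓝[<] 1) (𝓝 (F (circleIncl x))))
    (hinner : ∀ᵐ x ∂haarAddCircle, ‖F (circleIncl x)‖ = 1) :
    ∃ G : AddCircle (2 * Real.pi) → AddCircle (2 * Real.pi), Measurable G ∧
      ∀ᵐ x ∂haarAddCircle, circleIncl (G x) = F (circleIncl x) := by
  have hFm : AEMeasurable (fun x => F (circleIncl x)) haarAddCircle := by
    obtain ⟨r, -, hr, hlim⟩ := exists_seq_strictMono_tendsto' (zero_lt_one' ℝ)
    refine aemeasurable_of_tendsto_metrizable_ae atTop (f := fun n x => f (r n * circleIncl x))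
      (fun n => ?_) ?_
    · refine Continuous.aemeasurable ?_
      refine hf.continuousOn.comp_continuous (by unfold circleIncl; fun_prop) fun x => ?_
      rw [mem_ball_zero_iff, norm_mul, norm_fourier_apply, mul_one, Complex.norm_real,
        Real.norm_of_nonneg (hr n).1.le]
      exact (hr n).2
    · filter_upwards [hbd] with x hx
      refine hx.comp (tendsto_nhdsWithin_iff.2 ⟨hlim, Eventually.of_forall fun n => (hr n).2⟩)
  refine ⟨fun x => ((Complex.arg (hFm.mk _ x) : ℝ) : AddCircle (2 * Real.pi)),
    AddCircle.measurable_mk'.comp (Complex.measurable_arg.comp hFm.measurable_mk), ?_⟩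
  filter_upwards [hFm.ae_eq_mk, hinner] with x hx h1
  rw [circleIncl_coe, ← hx]
  have := Complex.norm_mul_exp_arg_mul_I (F (circleIncl x))
  rwa [h1, Complex.ofReal_one, one_mul] at this

lemma integral_fourier_mul_boundary {f : ℂ → ℂ} (hf : DifferentiableOn ℂ f (ball 0 1))
    (hmap : MapsTo f (ball 0 1) (ball 0 1))
    (hbd : ∀ᵐ x ∂haarAddCircle,
      Tendsto (fun r : ℝ => f (r * circleIncl x)) (𝓝[<] 1) (𝓝 (circleIncl (G x))))
    (n k : ℕ) (hn : 0 < n) :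
    ∫ x, fourier (n : ℤ) x * fourier (k : ℤ) (G x) ∂haarAddCircle = 0 := by
  have := integral_radial_limit (h := fun z => z ^ n * f z ^ k) (B := 1)
    (K := fun x => fourier (n : ℤ) x * fourier (k : ℤ) (G x))
    ((differentiableOn_id.pow n).mul (hf.pow k)) ?_ ?_
  · simpa [hn.ne'] using this
  · intro w hw
    rw [norm_mul, norm_pow, norm_pow]
    have h1 := (mem_ball_zero_iff.1 hw).le
    have h2 := (mem_ball_zero_iff.1 (hmap hw)).le
    exact mul_le_one₀ (pow_le_one₀ (norm_nonneg _) h1) (by positivity)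
      (pow_le_one₀ (norm_nonneg _) h2)
  · filter_upwards [hbd] with x hx
    simp only [fourier_natCast_eq_pow]
    refine Tendsto.mul (Tendsto.pow ?_ n) (hx.pow k)
    refine tendsto_nhdsWithin_of_tendsto_nhds ?_
    have : Continuous fun r : ℝ => (r : ℂ) * circleIncl x := by fun_prop
    simpa using this.tendsto 1

lemma integral_conj_fourier_mul_boundary {f : ℂ → ℂ} (hf : DifferentiableOn ℂ f (ball 0 1))
    (hmap : MapsTo f (ball 0 1) (ball 0 1)) (h0 : f 0 = 0)
    (hbd : ∀ᵐ x ∂haarAddCircle,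
      Tendsto (fun r : ℝ => f (r * circleIncl x)) (𝓝[<] 1) (𝓝 (circleIncl (G x))))
    (n k : ℕ) (hnk : n ≤ k) :
    ∫ x, fourier (-n : ℤ) x * fourier (k : ℤ) (G x) ∂haarAddCircle =
      0 ^ (k - n) * deriv f 0 ^ k := by
  have := integral_radial_limit (h := fun z => z ^ (k - n) * dslope f 0 z ^ k) (B := 1)
    (K := fun x => fourier (-n : ℤ) x * fourier (k : ℤ) (G x)) ?_ ?_ ?_
  · simpa using this
  · refine (differentiableOn_id.pow _).mul (DifferentiableOn.pow ?_ k)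
    exact (Complex.differentiableOn_dslope (ball_mem_nhds 0 one_pos)).2 hf
  · intro w hw
    rw [norm_mul, norm_pow, norm_pow]
    have h1 := (mem_ball_zero_iff.1 hw).le
    have h2 : ‖dslope f 0 w‖ ≤ 1 / 1 := Complex.norm_dslope_le_div_of_mapsTo_ball hf
      (by rw [h0]; exact hmap.mono_right ball_subset_closedBall) hw
    rw [div_one] at h2
    exact mul_le_one₀ (pow_le_one₀ (norm_nonneg _) h1) (by positivity)
      (pow_le_one₀ (norm_nonneg _) h2)
  · filter_upwards [hbd] with x hx
    have hx0 : circleIncl x ≠ 0 := norm_pos_iff.1 (by rw [norm_fourier_apply]; exact one_pos)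
    have hid : Tendsto (fun r : ℝ => (r : ℂ) * circleIncl x) (𝓝[<] 1) (𝓝 (circleIncl x)) := by
      refine tendsto_nhdsWithin_of_tendsto_nhds ?_
      have : Continuous fun r : ℝ => (r : ℂ) * circleIncl x := by fun_prop
      simpa using this.tendsto 1
    have hval : fourier (-n : ℤ) x * fourier (k : ℤ) (G x) =
        circleIncl x ^ (k - n) * (circleIncl (G x) / circleIncl x) ^ k := by
      have : fourier (-n : ℤ) x * circleIncl x ^ n = 1 := by
        rw [← fourier_natCast_eq_pow, ← fourier_add]
        simp
      rw [fourier_natCast_eq_pow, eq_inv_of_mul_eq_one_left this, div_pow]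
      obtain ⟨j, rfl⟩ := Nat.exists_eq_add_of_le hnk
      rw [Nat.add_sub_cancel_left, pow_add (circleIncl x)]
      field_simp
    rw [hval]
    refine ((hid.pow _).mul ((hx.div hid hx0).pow k)).congr' ?_
    filter_upwards [Ioo_mem_nhdsLT (zero_lt_one' ℝ)] with r hr
    have hr0 : (r : ℂ) * circleIncl x ≠ 0 :=
      mul_ne_zero (Complex.ofReal_ne_zero.2 hr.1.ne') hx0
    rw [dslope_of_ne _ hr0, slope_def_field, h0, sub_zero, sub_zero, Pi.div_apply]

lemma ae_iterate_circleIncl_eq (hG : MeasurePreserving G haarAddCircle haarAddCircle) {F : ℂ → ℂ}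
    (h : ∀ᵐ x ∂haarAddCircle, circleIncl (G x) = F (circleIncl x)) (n : ℕ) :
    ∀ᵐ x ∂haarAddCircle, F^[n] (circleIncl x) = circleIncl (G^[n] x) := by
  induction n with
  | zero => exact Eventually.of_forall fun x => rfl
  | succ n ih =>
    filter_upwards [h, hG.quasiMeasurePreserving.ae ih] with x h1 h2
    rw [Function.iterate_succ_apply, Function.iterate_succ_apply, ← h1, h2]

lemma spow_eq_fourier {F : ℂ → ℂ} {ε : ℤ} (hε : ε = 1 ∨ ε = -1) {n : ℕ}
    {x y : AddCircle (2 * Real.pi)} (h : F^[n] (circleIncl x) = circleIncl y) :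
    spow F ε n (circleIncl x) = fourier ε y := by
  rcases hε with rfl | rfl
  · rw [spow, if_pos rfl, h]
  · rw [spow, if_neg (by norm_num), h, fourier_neg_apply_eq_conj]

lemma norm_deriv_lt_one_of_not_rotation {f : ℂ → ℂ} (hf : DifferentiableOn ℂ f (ball 0 1))
    (hmap : MapsTo f (ball 0 1) (ball 0 1)) (h0 : f 0 = 0)
    (hrot : ¬ ∃ c : ℂ, EqOn f (fun w => c * w) (ball 0 1)) : ‖deriv f 0‖ < 1 := by
  have hmaps : MapsTo f (ball 0 1) (closedBall (f 0) 1) := by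
    rw [h0]
    exact hmap.mono_right ball_subset_closedBall
  have hz : (0 : ℂ) ∈ ball (0 : ℂ) 1 := mem_ball_self one_pos
  have hle := Complex.norm_dslope_le_div_of_mapsTo_ball hf hmaps hz
  rw [dslope_same, div_one] at hle
  refine lt_of_le_of_ne hle fun heq => hrot ⟨deriv f 0, fun w hw => ?_⟩
  have := Complex.affine_of_mapsTo_ball_of_norm_dslope_eq_div hf hmaps hz
    (by rw [dslope_same, heq, div_one]) hw
  simpa [h0, mul_comm] using this

end CircleMap

theorem stmt7 (f F : ℂ → ℂ)
    (hf : DifferentiableOn ℂ f (Metric.ball 0 1))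
    (hmap : Set.MapsTo f (Metric.ball 0 1) (Metric.ball 0 1))
    (h0 : f 0 = 0)
    (hbd : ∀ᵐ z ∂m, Filter.Tendsto (fun r : ℝ => f ((r : ℂ) * z))
      (nhdsWithin 1 (Set.Iio 1)) (nhds (F z)))
    (hinner : ∀ᵐ z ∂m, ‖F z‖ = 1)
    (hrot : ¬ ∃ c : ℂ, Set.EqOn f (fun w => c * w) (Metric.ball 0 1)) :
    ∃ C : ℝ, 0 < C ∧ ∀ ε₁ ε₂ ε₃ : ℤ,
      (ε₁ = 1 ∨ ε₁ = -1) → (ε₂ = 1 ∨ ε₂ = -1) → (ε₃ = 1 ∨ ε₃ = -1) →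
      ∀ n₁ n₂ n₃ : ℕ, 0 < n₁ → n₁ < n₂ → n₂ < n₃ →
        ‖∫ z, spow F ε₁ n₁ z * (spow F ε₂ n₂ z) ^ 2 * spow F ε₃ n₃ z ∂m‖
          ≤ C * ‖deriv f 0‖ ^ (n₃ - n₁) := by
  rw [ae_m_iff] at hbd hinner
  obtain ⟨G, hGm, hGF⟩ := exists_measurable_circle_map hf hbd hinner
  have hbdG : ∀ᵐ x ∂haarAddCircle,
      Tendsto (fun r : ℝ => f (r * circleIncl x)) (𝓝[<] 1) (𝓝 (circleIncl (G x))) := by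
    filter_upwards [hbd, hGF] with x h1 h2
    rwa [h2]
  have hpos := integral_fourier_mul_boundary hf hmap hbdG
  have hle := integral_conj_fourier_mul_boundary hf hmap h0 hbdG
  have hneg : ∀ n k : ℕ, n < k →
      ∫ x, fourier (-n : ℤ) x * fourier (k : ℤ) (G x) ∂haarAddCircle = 0 := fun n k hnk => by
    rw [hle n k hnk.le, zero_pow (by omega), zero_mul]
  have hdiag : ∀ n : ℕ, ∫ x, fourier (-n : ℤ) x * fourier (n : ℤ) (G x) ∂haarAddCircle =
      deriv f 0 ^ n := fun n => by
    rw [hle n n le_rfl, Nat.sub_self, pow_zero, one_mul]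
  have hG : MeasurePreserving G haarAddCircle haarAddCircle :=
    measurePreserving_of_integral_fourier_comp hGm fun k hk => by simpa using hneg 0 k hk
  obtain ⟨C, hC0, hC⟩ := exists_norm_integral_triple_le hG hpos hneg hdiag
    (norm_deriv_lt_one_of_not_rotation hf hmap h0 hrot)
  refine ⟨C, hC0, fun ε₁ ε₂ ε₃ h₁ h₂ h₃ n₁ n₂ n₃ _ h12 h23 => ?_⟩
  refine le_trans (le_of_eq ?_) (hC ε₁ ε₂ ε₃ h₁ h₂ n₁ n₂ n₃ h12 h23)
  rw [integral_m]
  congr 1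
  refine integral_congr_ae ?_
  filter_upwards [ae_iterate_circleIncl_eq hG hGF n₁, ae_iterate_circleIncl_eq hG hGF n₂,
    ae_iterate_circleIncl_eq hG hGF n₃] with x e₁ e₂ e₃
  rw [spow_eq_fourier h₁ e₁, spow_eq_fourier h₂ e₂, spow_eq_fourier h₃ e₃]
end

section
/- Let f be an inner function with f(0)=0 and a=|f'(0)|<1. Let n ≥ 1 and let {μ_α} be the Aleksandrov–Clark measures of f^n. For any integer l with 1 ≤ |l| ≤ n, the moment α ↦ ∫ conj(z)^l dμ_α(z) is a trigonometric polynomial in α of degree at most |l|; moreover there is n_0=n_0(f) such that for n ≥ n_0 all its coefficients are bounded in modulus by a^{n/2}. -/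
open MeasureTheory Set Metric Filter Complex

/-- The `l`-th Taylor coefficient of `F` at the origin. -/
noncomputable def taylorCoeff (F : ℂ → ℂ) (l : ℕ) : ℂ := iteratedDeriv l F 0 / l.factorial

lemma norm_taylorCoeff_le {F : ℂ → ℂ} {r M : ℝ} (hr : 0 < r) (hr1 : r < 1)
    (hF : DifferentiableOn ℂ F (ball 0 1)) (hM : ∀ z, ‖z‖ = r → ‖F z‖ ≤ M) (l : ℕ) :
    ‖taylorCoeff F l‖ ≤ M / r ^ l := by
  have hd : DiffContOnCl ℂ F (ball 0 r) :=
    (hF.mono (closedBall_subset_ball hr1)).diffContOnCl_ball subset_rfl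
  have := norm_iteratedDeriv_le_of_forall_mem_sphere_norm_le l hr hd
    (fun z hz => hM z (by simpa using hz))
  rw [taylorCoeff, norm_div, Complex.norm_natCast, div_le_iff₀ (by positivity)]
  calc _ ≤ _ := this
    _ = _ := by ring

lemma taylorCoeff_eq_zero_of_norm_le {F : ℂ → ℂ} {l : ℕ} {C : ℝ}
    (hF : DifferentiableOn ℂ F (ball 0 1))
    (h : ∀ z, ‖z‖ ≤ 1 / 2 → ‖F z‖ ≤ C * ‖z‖ ^ (l + 1)) : taylorCoeff F l = 0 := by
  have hlim : Tendsto (fun r : ℝ => C * r) (nhdsWithin 0 (Ioi 0)) (nhds 0) := by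
    simpa using ((continuous_const_mul C).tendsto 0).mono_left nhdsWithin_le_nhds
  have hev : ∀ᶠ r : ℝ in nhdsWithin 0 (Ioi 0), ‖taylorCoeff F l‖ ≤ C * r := by
    filter_upwards [Ioc_mem_nhdsGT (show (0 : ℝ) < 1 / 2 by norm_num)] with r hr
    have := norm_taylorCoeff_le (M := C * r ^ (l + 1)) hr.1 (by linarith [hr.2]) hF
      (fun z hz => hz ▸ h z (hz ▸ hr.2)) l
    have hr0 : r ^ l ≠ 0 := pow_ne_zero _ hr.1.ne'
    rwa [pow_succ, ← mul_assoc, mul_right_comm, mul_div_assoc, div_self hr0, mul_one] at this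
  exact norm_le_zero_iff.1 (ge_of_tendsto hlim hev)

lemma hasFPowerSeriesOnBall_ofScalars {F : ℂ → ℂ} {c : ℕ → ℂ} (hc : ∀ n, ‖c n‖ ≤ 1)
    (h : ∀ w ∈ ball (0 : ℂ) 1, HasSum (fun n => c n * w ^ n) (F w)) :
    HasFPowerSeriesOnBall F (FormalMultilinearSeries.ofScalars ℂ c) 0 1 where
  r_le := by
    refine FormalMultilinearSeries.le_radius_of_bound (r := 1) _ 1 fun n => ?_
    simpa using hc n
  r_pos := one_pos
  hasSum := by
    intro y hy
    have hy' : y ∈ ball (0 : ℂ) 1 := by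
      rwa [← ENNReal.ofReal_one, Metric.eball_ofReal] at hy
    simpa [FormalMultilinearSeries.ofScalars_apply_eq, smul_eq_mul, mul_comm] using h y hy'

lemma taylorCoeff_eq_of_hasFPowerSeriesOnBall {F : ℂ → ℂ} {c : ℕ → ℂ}
    (h : HasFPowerSeriesOnBall F (FormalMultilinearSeries.ofScalars ℂ c) 0 1) (l : ℕ) :
    taylorCoeff F l = c l := by
  have := h.analyticAt.hasFPowerSeriesAt.eq_formalMultilinearSeries h.hasFPowerSeriesAt
  exact congrFun (FormalMultilinearSeries.ofScalars_series_injective ℂ ℂ this) l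

lemma norm_dslope_lt_one {f : ℂ → ℂ} (hf : DifferentiableOn ℂ f (ball 0 1))
    (hmap : MapsTo f (ball 0 1) (ball 0 1)) (h0 : f 0 = 0) (hlt : ‖deriv f 0‖ < 1)
    {z : ℂ} (hz : z ∈ ball (0 : ℂ) 1) : ‖dslope f 0 z‖ < 1 := by
  have hm : MapsTo f (ball 0 1) (closedBall (f 0) 1) := by
    rw [h0]; exact hmap.mono_right ball_subset_closedBall
  refine lt_of_le_of_ne (by simpa using norm_dslope_le_div_of_mapsTo_ball hf hm hz) fun heq => ?_
  obtain ⟨C, hC, hE⟩ := affine_of_mapsTo_ball_of_exists_norm_dslope_eq_div' hf hm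
    ⟨z, hz, by simpa using heq⟩
  have hev : f =ᶠ[nhds 0] fun z => z * C := by
    filter_upwards [ball_mem_nhds (0 : ℂ) one_pos] with w hw
    simpa [h0] using hE hw
  have : deriv f 0 = C := by
    rw [hev.deriv_eq]; simp
  rw [this, hC] at hlt
  norm_num at hlt

lemma norm_eq_norm_mul_dslope {f : ℂ → ℂ} (h0 : f 0 = 0) (z : ℂ) :
    ‖f z‖ = ‖z‖ * ‖dslope f 0 z‖ := by
  have := sub_smul_dslope f 0 z
  rw [h0, sub_zero, sub_zero, smul_eq_mul] at this
  rw [← this, norm_mul]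

lemma exists_norm_le_mul_norm {f : ℂ → ℂ} (hf : DifferentiableOn ℂ f (ball 0 1))
    (hmap : MapsTo f (ball 0 1) (ball 0 1)) (h0 : f 0 = 0) (hlt : ‖deriv f 0‖ < 1)
    {r : ℝ} (hr : 0 ≤ r) (hr1 : r < 1) :
    ∃ ρ : ℝ, 0 ≤ ρ ∧ ρ < 1 ∧ ∀ z, ‖z‖ ≤ r → ‖f z‖ ≤ ρ * ‖z‖ := by
  have hd : DifferentiableOn ℂ (dslope f 0) (ball 0 1) :=
    (differentiableOn_dslope (ball_mem_nhds _ one_pos)).2 hf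
  obtain ⟨z₀, hz₀, hmax⟩ := (isCompact_closedBall (0 : ℂ) r).exists_isMaxOn
    ⟨0, by simpa using hr⟩ (hd.continuousOn.mono (closedBall_subset_ball hr1)).norm
  refine ⟨_, norm_nonneg (dslope f 0 z₀),
    norm_dslope_lt_one hf hmap h0 hlt (closedBall_subset_ball hr1 hz₀), fun z hz => ?_⟩
  rw [norm_eq_norm_mul_dslope h0, mul_comm]
  exact mul_le_mul_of_nonneg_right (hmax (by simpa using hz)) (norm_nonneg _)

lemma norm_iterate_le_pow_mul {f : ℂ → ℂ} {ρ r : ℝ} (hρ : 0 ≤ ρ) (hρ1 : ρ ≤ 1)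
    (h : ∀ z, ‖z‖ ≤ r → ‖f z‖ ≤ ρ * ‖z‖) (n : ℕ) {z : ℂ} (hz : ‖z‖ ≤ r) :
    ‖f^[n] z‖ ≤ ρ ^ n * ‖z‖ := by
  induction n with
  | zero => simp
  | succ n ih =>
    rw [Function.iterate_succ_apply']
    have hle : ‖f^[n] z‖ ≤ r :=
      (ih.trans (mul_le_of_le_one_left (norm_nonneg _) (pow_le_one₀ hρ hρ1))).trans hz
    calc _ ≤ ρ * ‖f^[n] z‖ := h _ hle
      _ ≤ ρ * (ρ ^ n * ‖z‖) := by gcongr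
      _ = _ := by ring

lemma exists_norm_iterate_le {f : ℂ → ℂ} (hf : DifferentiableOn ℂ f (ball 0 1))
    (hmap : MapsTo f (ball 0 1) (ball 0 1)) (h0 : f 0 = 0)
    {q : ℝ} (hq : ‖deriv f 0‖ < q) (hq1 : q ≤ 1) {r : ℝ} (hr : 0 ≤ r) (hr1 : r < 1) :
    ∃ C : ℝ, ∀ n z, ‖z‖ ≤ r → ‖f^[n] z‖ ≤ C * q ^ n := by
  have hq0 : 0 < q := (norm_nonneg _).trans_lt hq
  obtain ⟨ρ, hρ, hρ1, hρf⟩ := exists_norm_le_mul_norm hf hmap h0 (hq.trans_le hq1) hr hr1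
  have hd : DifferentiableAt ℂ f 0 := hf.differentiableAt (ball_mem_nhds _ one_pos)
  have hev : ∀ᶠ z in nhds (0 : ℂ), ‖dslope f 0 z‖ < q := by
    refine (continuousAt_dslope_same.2 hd).norm.eventually_lt_const ?_
    simpa using hq
  obtain ⟨δ, hδ, hδf⟩ := Metric.eventually_nhds_iff.1 hev
  obtain ⟨N, hN⟩ := exists_pow_lt_of_lt_one hδ hρ1
  have hloc : ∀ z, ‖z‖ ≤ ρ ^ N → ‖f z‖ ≤ q * ‖z‖ := fun z hz => by
    rw [norm_eq_norm_mul_dslope h0, mul_comm]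
    exact mul_le_mul_of_nonneg_right
      (hδf (by simpa using hz.trans_lt hN)).le (norm_nonneg _)
  refine ⟨(q ^ N)⁻¹, fun n z hz => ?_⟩
  have hz1 : ‖z‖ ≤ 1 := hz.trans hr1.le
  rw [inv_mul_eq_div, le_div_iff₀ (by positivity)]
  rcases le_total n N with hn | hn
  · calc ‖f^[n] z‖ * q ^ N ≤ 1 * q ^ n := by
          gcongr ?_ * ?_
          · exact (norm_iterate_le_pow_mul hρ hρ1.le hρf n hz).trans
              (mul_le_one₀ (pow_le_one₀ hρ hρ1.le) (norm_nonneg _) hz1)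
          · exact pow_le_pow_of_le_one hq0.le hq1 hn
      _ = _ := one_mul _
  · obtain ⟨k, rfl⟩ := Nat.exists_eq_add_of_le' hn
    have hNz : ‖f^[N] z‖ ≤ ρ ^ N := (norm_iterate_le_pow_mul hρ hρ1.le hρf N hz).trans
      (mul_le_of_le_one_right (by positivity) hz1)
    have hNz1 : ‖f^[N] z‖ ≤ 1 := hNz.trans (pow_le_one₀ hρ hρ1.le)
    rw [Function.iterate_add_apply, pow_add]
    gcongr
    exact (norm_iterate_le_pow_mul hq0.le hq1 hloc k hNz).trans
      (mul_le_of_le_one_right (by positivity) hNz1)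

lemma norm_iterate_le_pow_succ {f : ℂ → ℂ} (hf : DifferentiableOn ℂ f (ball 0 1))
    (hmap : MapsTo f (ball 0 1) (ball 0 1)) (h0 : f 0 = 0) (h1 : deriv f 0 = 0) (n : ℕ)
    {z : ℂ} (hz : z ∈ ball (0 : ℂ) 1) : ‖f^[n] z‖ ≤ ‖z‖ ^ (n + 1) := by
  have hm : MapsTo f (ball 0 1) (closedBall (f 0) 1) := by
    rw [h0]; exact hmap.mono_right ball_subset_closedBall
  have hd : DifferentiableAt ℂ f 0 := hf.differentiableAt (ball_mem_nhds _ one_pos)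
  have hsq : ∀ w ∈ ball (0 : ℂ) 1, ‖f w‖ ≤ ‖w‖ ^ 2 := fun w hw => by
    have hlo : (f · - f 0) =o[nhds 0] (fun w : ℂ => ‖w - 0‖ ^ 1) := by
      have := hd.hasDerivAt.isLittleO
      simpa [h1] using this.norm_right
    simpa [h0] using dist_le_mul_div_pow_of_mapsTo_ball_of_isLittleO hf hm hlo hw
  have hz1 : ‖z‖ ≤ 1 := by simpa using (mem_ball_zero_iff.1 hz).le
  induction n with
  | zero => simp
  | succ n ih =>
    rw [Function.iterate_succ_apply']
    calc _ ≤ ‖f^[n] z‖ ^ 2 := hsq _ (hmap.iterate n hz)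
      _ ≤ (‖z‖ ^ (n + 1)) ^ 2 := by gcongr
      _ = ‖z‖ ^ ((n + 1) * 2) := by rw [pow_mul]
      _ ≤ _ := pow_le_pow_of_le_one (norm_nonneg _) hz1 (by lia)

lemma differentiableOn_iterate {f : ℂ → ℂ} (hf : DifferentiableOn ℂ f (ball 0 1))
    (hmap : MapsTo f (ball 0 1) (ball 0 1)) (n : ℕ) :
    DifferentiableOn ℂ f^[n] (ball 0 1) := by
  induction n with
  | zero => exact differentiableOn_id
  | succ n ih =>
    rw [Function.iterate_succ']
    exact hf.comp ih (hmap.iterate n)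

lemma exists_forall_norm_taylorCoeff_iterate_pow_le {f : ℂ → ℂ}
    (hf : DifferentiableOn ℂ f (ball 0 1)) (hmap : MapsTo f (ball 0 1) (ball 0 1))
    (h0 : f 0 = 0) (hlt : ‖deriv f 0‖ < 1) :
    ∃ n₀ : ℕ, ∀ n, n₀ ≤ n → ∀ l k : ℕ, l ≤ n → 1 ≤ k →
      ‖taylorCoeff (fun z => f^[n] z ^ k) l‖ ≤ ‖deriv f 0‖ ^ ((n : ℝ) / 2) := by
  have hdk : ∀ n k : ℕ, DifferentiableOn ℂ (fun z => f^[n] z ^ k) (ball 0 1) := fun n k =>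
    (differentiableOn_iterate hf hmap n).pow k
  have hpow : ∀ n k : ℕ, 1 ≤ k → ∀ z ∈ ball (0 : ℂ) 1, ‖f^[n] z ^ k‖ ≤ ‖f^[n] z‖ := by
    intro n k hk z hz
    rw [norm_pow]
    have : ‖f^[n] z‖ ≤ 1 := (mem_ball_zero_iff.1 (hmap.iterate n hz)).le
    exact pow_le_of_le_one (norm_nonneg _) this (by lia)
  set a := ‖deriv f 0‖ with ha
  rcases (norm_nonneg (deriv f 0)).eq_or_lt with ha0 | ha0
  · refine ⟨0, fun n _ l k hl hk => ?_⟩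
    rw [taylorCoeff_eq_zero_of_norm_le (C := 1) (hdk n k), norm_zero]
    · positivity
    · intro z hz
      have hz' : z ∈ ball (0 : ℂ) 1 := by
        rw [mem_ball_zero_iff]; linarith
      calc _ ≤ _ := hpow n k hk z hz'
        _ ≤ _ := norm_iterate_le_pow_succ hf hmap h0 (norm_eq_zero.1 ha0.symm) n hz'
        _ ≤ ‖z‖ ^ (l + 1) :=
          pow_le_pow_of_le_one (norm_nonneg _) (mem_ball_zero_iff.1 hz').le (by lia)
        _ = _ := (one_mul _).symm
  · rw [← ha] at ha0
    have hs : a < √a := by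
      rw [Real.lt_sqrt ha0.le]; nlinarith
    have hs0 : 0 < √a := Real.sqrt_pos.2 ha0
    have hs1 : √a < 1 := by rw [Real.sqrt_lt' one_pos]; simpa using hlt
    obtain ⟨q, hq, hqs⟩ := exists_between hs
    obtain ⟨r, hr, hr1⟩ := exists_between ((div_lt_one hs0).2 hqs)
    have hq0 : 0 < q := ha0.trans hq
    have hr0 : 0 < r := (div_pos hq0 hs0).trans hr
    obtain ⟨C, hC⟩ := exists_norm_iterate_le hf hmap h0 hq (hqs.trans hs1).le hr0.le hr1
    have ht1 : q / r / √a < 1 := by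
      rw [div_div, div_lt_one (by positivity)]
      rwa [div_lt_iff₀ hs0] at hr
    have hlim : Tendsto (fun n : ℕ => C * (q / r / √a) ^ n) atTop (nhds 0) := by
      simpa using (tendsto_pow_atTop_nhds_zero_of_lt_one (by positivity) ht1).const_mul C
    obtain ⟨n₀, hn₀⟩ := eventually_atTop.1 (hlim.eventually_le_const one_pos)
    refine ⟨n₀, fun n hn l k hl hk => ?_⟩
    have hM : ∀ z : ℂ, ‖z‖ = r → ‖f^[n] z ^ k‖ ≤ C * q ^ n := fun z hz =>
      (hpow n k hk z (by rw [mem_ball_zero_iff, hz]; exact hr1)).trans (hC n z hz.le)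
    have hM0 : 0 ≤ C * q ^ n :=
      (norm_nonneg _).trans (hM r (by rw [Complex.norm_real, Real.norm_of_nonneg hr0.le]))
    calc _ ≤ C * q ^ n / r ^ l := norm_taylorCoeff_le hr0 hr1 (hdk n k) hM l
      _ ≤ C * q ^ n / r ^ n := by
        gcongr C * q ^ n / ?_
        exact pow_le_pow_of_le_one hr0.le hr1.le hl
      _ = C * (q / r / √a) ^ n * √a ^ n := by
        rw [mul_assoc, ← mul_pow, div_mul_cancel₀ _ hs0.ne', div_pow, mul_div_assoc]
      _ ≤ 1 * √a ^ n := by gcongr; exact hn₀ n hn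
      _ = _ := by
        rw [one_mul, Real.sqrt_eq_rpow, ← Real.rpow_natCast, ← Real.rpow_mul ha0.le]
        congr 1; ring

open scoped ComplexConjugate in
lemma norm_conj_mul_lt_one {z w : ℂ} (hz : ‖z‖ = 1) (hw : w ∈ ball (0 : ℂ) 1) :
    ‖conj z * w‖ < 1 := by
  simpa [hz] using hw

open scoped ComplexConjugate in
lemma re_add_div_sub {z w : ℂ} (hz : ‖z‖ = 1) (hw : w ∈ ball (0 : ℂ) 1) :
    ((z + w) / (z - w)).re = 2 * ((1 - conj z * w)⁻¹).re - 1 := by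
  have hzz : z * conj z = 1 := by rw [Complex.mul_conj', hz]; norm_num
  have hne : 1 - conj z * w ≠ 0 := fun h => by
    have := norm_conj_mul_lt_one hz hw
    rw [← sub_eq_zero.1 h] at this
    simp at this
  have hzw : z - w ≠ 0 := fun h => by
    rw [← sub_eq_zero.1 h] at hw
    simp [hz] at hw
  have : (z + w) / (z - w) = 2 * (1 - conj z * w)⁻¹ - 1 := by
    rw [eq_sub_iff_add_eq, ← div_eq_mul_inv, div_add_one hzw, div_eq_div_iff hzw hne]
    linear_combination (-2 * w) * hzz
  rw [this]
  simp

section Moments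
open scoped ComplexConjugate

variable {ν : Measure ℂ} [IsProbabilityMeasure ν]

lemma integrable_conj_pow (hν : ∀ᵐ z ∂ν, ‖z‖ = 1) (n : ℕ) :
    Integrable (fun z : ℂ => conj z ^ n) ν := by
  refine Integrable.of_bound (by fun_prop) 1 ?_
  filter_upwards [hν] with z hz
  simp [hz]

lemma norm_integral_conj_pow_le (hν : ∀ᵐ z ∂ν, ‖z‖ = 1) (n : ℕ) :
    ‖∫ z, conj z ^ n ∂ν‖ ≤ 1 := by
  refine (norm_integral_le_of_norm_le_const (C := 1) ?_).trans (by simp)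
  filter_upwards [hν] with z hz
  simp [hz]

lemma integrable_inv_one_sub_conj_mul (hν : ∀ᵐ z ∂ν, ‖z‖ = 1) {w : ℂ}
    (hw : w ∈ ball (0 : ℂ) 1) : Integrable (fun z : ℂ => (1 - conj z * w)⁻¹) ν := by
  refine Integrable.of_bound (by fun_prop) (1 - ‖w‖)⁻¹ ?_
  filter_upwards [hν] with z hz
  rw [norm_inv]
  have hw' : 0 < 1 - ‖w‖ := by simpa using hw
  gcongr
  simpa [hz] using norm_sub_norm_le 1 (conj z * w)

/-- The Cauchy transform is the generating function of the moments. -/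
lemma hasSum_integral_conj_pow (hν : ∀ᵐ z ∂ν, ‖z‖ = 1) {w : ℂ} (hw : w ∈ ball (0 : ℂ) 1) :
    HasSum (fun n : ℕ => (∫ z, conj z ^ n ∂ν) * w ^ n) (∫ z, (1 - conj z * w)⁻¹ ∂ν) := by
  have hw' : ‖w‖ < 1 := by simpa using hw
  have h := hasSum_integral_of_summable_integral_norm (μ := ν)
    (F := fun (n : ℕ) (z : ℂ) => conj z ^ n * w ^ n)
    (fun n => (integrable_conj_pow hν n).mul_const _) ?_
  · simp only [integral_mul_const] at h
    have hgeom : (fun z : ℂ => ∑' n : ℕ, conj z ^ n * w ^ n) =ᵐ[ν]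
        fun z => (1 - conj z * w)⁻¹ := by
      filter_upwards [hν] with z hz
      simp only [← mul_pow]
      exact tsum_geometric_of_norm_lt_one (norm_conj_mul_lt_one hz hw)
    rwa [integral_congr_ae hgeom] at h
  · convert summable_geometric_of_lt_one (norm_nonneg w) hw' using 2 with n
    have : (fun z : ℂ => ‖conj z ^ n * w ^ n‖) =ᵐ[ν] fun _ => ‖w‖ ^ n := by
      filter_upwards [hν] with z hz
      simp [hz]
    rw [integral_congr_ae this]
    simp

lemma integral_re_add_div_sub (hν : ∀ᵐ z ∂ν, ‖z‖ = 1) {w : ℂ} (hw : w ∈ ball (0 : ℂ) 1) :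
    ∫ z, ((z + w) / (z - w)).re ∂ν = 2 * (∫ z, (1 - conj z * w)⁻¹ ∂ν).re - 1 := by
  have hint := integrable_inv_one_sub_conj_mul hν hw
  have : (fun z : ℂ => ((z + w) / (z - w)).re) =ᵐ[ν]
      fun z => 2 * ((1 - conj z * w)⁻¹).re - 1 := by
    filter_upwards [hν] with z hz using re_add_div_sub hz hw
  have hre : ∫ z, ((1 - conj z * w)⁻¹).re ∂ν = (∫ z, (1 - conj z * w)⁻¹ ∂ν).re :=
    integral_re hint
  have hint' : Integrable (fun z : ℂ => ((1 - conj z * w)⁻¹).re) ν := hint.re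
  rw [integral_congr_ae this, integral_sub (hint'.const_mul 2) (integrable_const 1),
    integral_const_mul, hre]
  simp

/-- The Cauchy transform of the Aleksandrov–Clark measure `ν` of `g` at `α`. -/
lemma integral_inv_one_sub_conj_mul_eq (hν : ∀ᵐ z ∂ν, ‖z‖ = 1) {g : ℂ → ℂ}
    (hg : DifferentiableOn ℂ g (ball 0 1)) (hmap : MapsTo g (ball 0 1) (ball 0 1))
    (h0 : g 0 = 0) {α : ℂ} (hα : ‖α‖ = 1)
    (h : ∀ w ∈ ball (0 : ℂ) 1,
      ((α + g w) / (α - g w)).re = ∫ z, ((z + w) / (z - w)).re ∂ν)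
    {w : ℂ} (hw : w ∈ ball (0 : ℂ) 1) :
    ∫ z, (1 - conj z * w)⁻¹ ∂ν = (1 - conj α * g w)⁻¹ := by
  have hM := (hasFPowerSeriesOnBall_ofScalars (norm_integral_conj_pow_le hν)
    fun w hw => hasSum_integral_conj_pow hν hw).differentiableOn
  rw [← ENNReal.ofReal_one, Metric.eball_ofReal] at hM
  have hG : DifferentiableOn ℂ (fun w => (1 - conj α * g w)⁻¹) (ball 0 1) := by
    refine DifferentiableOn.inv (by fun_prop) fun w hw h => ?_
    have := norm_conj_mul_lt_one hα (hmap hw)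
    rw [← sub_eq_zero.1 h] at this
    simp at this
  obtain ⟨c, hc⟩ := ((hM.sub hG).analyticOnNhd isOpen_ball).eq_const_of_re_eq_const (c₀ := 0)
    (fun x hx => by
      have hx' := h x hx
      rw [integral_re_add_div_sub hν hx, re_add_div_sub hα (hmap hx)] at hx'
      simp only [Pi.sub_apply, sub_re]
      linarith) isOpen_ball ((convex_ball 0 1).isConnected ⟨0, mem_ball_self one_pos⟩)
  have hc0 : c = 0 := by
    rw [← hc 0 (mem_ball_self one_pos)]
    simp [h0]
  simpa [hc0, sub_eq_zero] using hc w hw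

/-- The moments of the Aleksandrov–Clark measure `ν` of `g` at `α`. -/
lemma integral_conj_pow_eq_sum (hν : ∀ᵐ z ∂ν, ‖z‖ = 1) {g : ℂ → ℂ}
    (hg : DifferentiableOn ℂ g (ball 0 1)) (hmap : MapsTo g (ball 0 1) (ball 0 1))
    (h0 : g 0 = 0) {α : ℂ} (hα : ‖α‖ = 1)
    (h : ∀ w ∈ ball (0 : ℂ) 1,
      ((α + g w) / (α - g w)).re = ∫ z, ((z + w) / (z - w)).re ∂ν)
    {l : ℕ} (hl : 1 ≤ l) :
    ∫ z, conj z ^ l ∂ν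
      = ∑ k ∈ Finset.Icc 1 l, taylorCoeff (fun w => g w ^ k) l * conj α ^ k := by
  have hα' : ‖conj α‖ = 1 := by simpa using hα
  have hne : ∀ w ∈ ball (0 : ℂ) 1, 1 - conj α * g w ≠ 0 := fun w hw h => by
    have := norm_conj_mul_lt_one hα (hmap hw)
    rw [← sub_eq_zero.1 h] at this
    simp at this
  set R : ℂ → ℂ := fun w => (conj α * g w) ^ (l + 1) * (1 - conj α * g w)⁻¹ with hR
  have hRd : DifferentiableOn ℂ R (ball 0 1) :=
    DifferentiableOn.mul (by fun_prop) (DifferentiableOn.inv (by fun_prop) hne)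
  have hR0 : taylorCoeff R l = 0 := by
    refine taylorCoeff_eq_zero_of_norm_le (C := 2) hRd fun z hz => ?_
    have hgz : ‖g z‖ ≤ ‖z‖ := norm_le_norm_of_mapsTo_ball hg
      (hmap.mono_right ball_subset_closedBall) h0 (by linarith)
    have hden : 1 / 2 ≤ ‖1 - conj α * g z‖ := by
      have := norm_sub_norm_le 1 (conj α * g z)
      rw [norm_one, norm_mul, hα', one_mul] at this
      linarith
    rw [hR, norm_mul, norm_pow, norm_mul, hα', one_mul, norm_inv, mul_comm]
    gcongr
    exact (inv_anti₀ (by norm_num) hden).trans (by norm_num)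
  have hexp : (fun w => ∫ z, (1 - conj z * w)⁻¹ ∂ν) =ᶠ[nhds 0]
      fun w => (∑ k ∈ Finset.range (l + 1), conj α ^ k * g w ^ k) + R w := by
    filter_upwards [ball_mem_nhds (0 : ℂ) one_pos] with w hw
    rw [integral_inv_one_sub_conj_mul_eq hν hg hmap h0 hα h hw]
    have hgeom := mul_neg_geom_sum (conj α * g w) (l + 1)
    have := hne w hw
    simp only [mul_pow] at hgeom
    simp only [hR, mul_pow]
    field_simp
    linear_combination -hgeom
  have hcd : ∀ {F : ℂ → ℂ}, DifferentiableOn ℂ F (ball 0 1) → ContDiffAt ℂ l F 0 := fun hF =>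
    (hF.analyticAt (ball_mem_nhds _ one_pos)).contDiffAt
  rw [← taylorCoeff_eq_of_hasFPowerSeriesOnBall (hasFPowerSeriesOnBall_ofScalars
    (norm_integral_conj_pow_le hν) fun w hw => hasSum_integral_conj_pow hν hw) l, taylorCoeff,
    hexp.iteratedDeriv_eq l, iteratedDeriv_fun_add
      (hcd (by fun_prop)) (hcd hRd), add_div, ← taylorCoeff.eq_1 R, hR0, add_zero,
    iteratedDeriv_fun_sum fun k _ => hcd (by fun_prop), Finset.sum_div,
    Finset.range_eq_Ico, Finset.sum_eq_sum_Ico_succ_bot (by lia)]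
  have hzero : iteratedDeriv l (fun w => conj α ^ 0 * g w ^ 0) 0 = 0 := by
    simp [iteratedDeriv_const, (by lia : l ≠ 0)]
  rw [hzero, zero_div, zero_add]
  refine Finset.sum_congr rfl fun k _ => ?_
  rw [iteratedDeriv_const_mul_field, taylorCoeff]
  ring

end Moments

theorem stmt17 (f F : ℂ → ℂ)
    (hf : DifferentiableOn ℂ f (Metric.ball 0 1))
    (hmap : Set.MapsTo f (Metric.ball 0 1) (Metric.ball 0 1))
    (h0 : f 0 = 0)
    (hbd : ∀ᵐ z ∂m, Filter.Tendsto (fun r : ℝ => f ((r : ℂ) * z))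
      (nhdsWithin 1 (Set.Iio 1)) (nhds (F z)))
    (hinner : ∀ᵐ z ∂m, ‖F z‖ = 1)
    (hlt : ‖deriv f 0‖ < 1) :
    ∃ n₀ : ℕ, ∀ n : ℕ, 1 ≤ n → ∀ μ : ℂ → Measure ℂ,
      (∀ α : ℂ, ‖α‖ = 1 → IsProbabilityMeasure (μ α)) →
      (∀ α : ℂ, ‖α‖ = 1 → ∀ᵐ z ∂(μ α), ‖z‖ = 1) →
      (∀ α : ℂ, ‖α‖ = 1 → ∀ w ∈ Metric.ball (0:ℂ) 1,
        ((α + f^[n] w) / (α - f^[n] w)).re = ∫ z, ((z + w) / (z - w)).re ∂(μ α)) →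
      ∀ l : ℤ, 1 ≤ |l| → |l| ≤ (n : ℤ) →
        ∃ c : ℤ → ℂ,
          (∀ α : ℂ, ‖α‖ = 1 →
            ∫ z, ((starRingEnd ℂ) z) ^ l ∂(μ α)
              = ∑ k ∈ Finset.Icc (-(l.natAbs : ℤ)) (l.natAbs : ℤ), c k * α ^ k) ∧
          (n₀ ≤ n → ∀ k : ℤ, ‖c k‖ ≤ ‖deriv f 0‖ ^ ((n : ℝ) / 2)) := by
  obtain ⟨n₀, hn₀⟩ := exists_forall_norm_taylorCoeff_iterate_pow_le hf hmap h0 hlt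
  refine ⟨n₀, fun n hn μ hprob hcirc hclark l hl hln => ?_⟩
  rw [Int.abs_eq_natAbs] at hl hln
  have hmom : ∀ α : ℂ, ‖α‖ = 1 → ∫ z, (starRingEnd ℂ) z ^ l.natAbs ∂(μ α)
      = ∑ k ∈ Finset.Icc 1 l.natAbs,
        taylorCoeff (fun w => f^[n] w ^ k) l.natAbs * (starRingEnd ℂ) α ^ k := fun α hα => by
    have := hprob α hα
    exact integral_conj_pow_eq_sum (hcirc α hα) (differentiableOn_iterate hf hmap n)
      (hmap.iterate n) (Function.iterate_fixed h0 n) hα (hclark α hα) (by lia)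
  have hcoef : n₀ ≤ n → ∀ k : ℕ, 1 ≤ k →
      ‖taylorCoeff (fun w => f^[n] w ^ k) l.natAbs‖ ≤ ‖deriv f 0‖ ^ ((n : ℝ) / 2) :=
    fun h k hk => hn₀ n h l.natAbs k (by lia) hk
  have hconj : ∀ z : ℂ, ‖z‖ = 1 → (starRingEnd ℂ) z = z⁻¹ := fun z hz => by
    rw [Complex.inv_def, Complex.normSq_eq_norm_sq, hz]; simp
  set b : ℕ → ℂ := fun k => taylorCoeff (fun w => f^[n] w ^ k) l.natAbs with hb
  rcases le_total 0 l with hl0 | hl0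
  · refine ⟨fun k => if 1 ≤ -k then b k.natAbs else 0, fun α hα => ?_, fun h k => ?_⟩
    · have hll : l = (l.natAbs : ℤ) := by lia
      have : ∀ z : ℂ, (starRingEnd ℂ) z ^ l = (starRingEnd ℂ) z ^ l.natAbs := fun z => by
        conv_lhs => rw [hll, zpow_natCast]
      simp only [this]
      rw [hmom α hα]
      simp only [ite_mul, zero_mul]
      rw [← Finset.sum_filter]
      refine Finset.sum_bij' (fun k _ => -(k : ℤ)) (fun k _ => k.natAbs) ?_ ?_ ?_ ?_ ?_
      · intro k hk; simp only [Finset.mem_Icc, Finset.mem_filter] at hk ⊢; lia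
      · intro k hk; simp only [Finset.mem_Icc, Finset.mem_filter] at hk ⊢; lia
      · intro k hk; simp
      · intro k hk; simp only [Finset.mem_Icc, Finset.mem_filter] at hk; lia
      · intro k hk
        simp [hconj α hα, hb]
    · dsimp only
      split_ifs with hk
      · exact hcoef h _ (by lia)
      · simpa using Real.rpow_nonneg (norm_nonneg _) _
  · refine ⟨fun k => if 1 ≤ k then (starRingEnd ℂ) (b k.natAbs) else 0, fun α hα => ?_,
      fun h k => ?_⟩
    · have hll : l = -(l.natAbs : ℤ) := by lia
      have : (fun z : ℂ => (starRingEnd ℂ) z ^ l) =ᵐ[μ α]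
          fun z => (starRingEnd ℂ) ((starRingEnd ℂ) z ^ l.natAbs) := by
        filter_upwards [hcirc α hα] with z hz
        rw [map_pow, Complex.conj_conj, hconj z hz]
        conv_lhs => rw [hll, zpow_neg, zpow_natCast, inv_pow, inv_inv]
      rw [integral_congr_ae this, integral_conj, hmom α hα, map_sum]
      simp only [ite_mul, zero_mul]
      rw [← Finset.sum_filter]
      refine Finset.sum_bij' (fun k _ => (k : ℤ)) (fun k _ => k.natAbs) ?_ ?_ ?_ ?_ ?_
      · intro k hk; simp only [Finset.mem_Icc, Finset.mem_filter] at hk ⊢; lia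
      · intro k hk; simp only [Finset.mem_Icc, Finset.mem_filter] at hk ⊢; lia
      · intro k hk; simp
      · intro k hk; simp only [Finset.mem_Icc, Finset.mem_filter] at hk; lia
      · intro k hk
        simp [hb]
    · dsimp only
      split_ifs with hk
      · rw [RCLike.norm_conj]; exact hcoef h _ (by lia)
      · simpa using Real.rpow_nonneg (norm_nonneg _) _
end
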